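/- For a closed subsemigroup 𝔖 of SL(n+1,ℝ), 𝔖 acts distally on Sⁿ (via T·x = T(x)/‖T(x)‖) if and only if every cyclic subsemigroup {Tᵐ : m ∈ ℕ}, T ∈ 𝔖, acts distally on Sⁿ. -/

import Mathlib

/-- The normalized ("projective") action of a matrix on `ℝ^m`. -/
noncomputable def nact {m : ℕ} (A : Matrix (Fin m) (Fin m) ℝ)
    (x : EuclideanSpace ℝ (Fin m)) : EuclideanSpace ℝ (Fin m) :=
  ‖Matrix.toEuclideanLin A x‖⁻¹ • Matrix.toEuclideanLin A x

/-!
A set of matrices of determinant one acts distally on the sphere if and only if it is bounded: along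
an unbounded sequence the normalized matrices `T / ‖T‖` accumulate at a singular matrix, and this
makes two distinct points of the sphere collide. It remains to bound a closed semigroup `S` all of
whose elements are power-bounded. The closure of the powers of an element of `S` contains an
idempotent of determinant one, that is, the identity, so `S` is a closed group.

The algebra `A` spanned by such a group `G` acts in block triangular form with simple diagonal
blocks, and on a simple block the trace form bounds the entries of the elements of `G`, because
their traces are bounded. Shrinking the entries off the diagonal blocks degenerates the
representation to a homomorphism `L` which is bounded on `G`, and by compactness it suffices to
bound the elements `g` of `G` for which `L g` is close to `1`. If the Lie algebra of `G` is
central, any two of these commute, by Zassenhaus' iterated commutators and the absence of small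
subgroups, and commuting power-bounded elements are simultaneously diagonalizable over `ℂ`.
Otherwise let `X` be a non-central element of the Lie algebra: up to small exponentials, the
elements in question centralize `X`, and induction on the dimension of the span applies to the
centralizer of `X` in `G`.
-/

open Filter Topology NormedSpace

section PowerBounded

/-- An element of a normed algebra is power-bounded if its powers `1, a, a ^ 2, …` form a bounded
set. -/
def IsPowerBounded {A : Type*} [NormedRing A] (a : A) : Prop :=
  Bornology.IsBounded (Set.range fun m : ℕ => a ^ m)

theorem IsPowerBounded.map {A B : Type*} [NormedRing A] [NormedAlgebra ℝ A]
    [FiniteDimensional ℝ A] [NormedRing B] [NormedAlgebra ℝ B] {a : A} (ha : IsPowerBounded a)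
    (f : A →ₐ[ℝ] B) : IsPowerBounded (f a) := by
  have h := (f.toLinearMap.toContinuousLinearMap.lipschitz).isBounded_image ha
  rw [← Set.range_comp] at h
  simpa [IsPowerBounded, Function.comp_def] using! h

theorem isPowerBounded_map_iff {A B : Type*} [NormedRing A] [NormedAlgebra ℝ A]
    [FiniteDimensional ℝ A] [NormedRing B] [NormedAlgebra ℝ B] {f : A →ₐ[ℝ] B}
    (hf : Function.Injective f) {a : A} : IsPowerBounded (f a) ↔ IsPowerBounded a := by
  refine ⟨fun h => ?_, fun h => h.map f⟩
  obtain ⟨K, -, hK⟩ := f.toLinearMap.exists_antilipschitzWith (LinearMap.ker_eq_bot.2 hf)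
  have := hK.isBounded_preimage h
  refine this.subset ?_
  rintro _ ⟨m, rfl⟩
  exact ⟨m, (map_pow f a m).symm⟩

-- A normed algebra has no small subgroups: `‖u ^ (2 ^ k) - 1‖` would grow like `(3 / 2) ^ k`.
theorem eq_one_of_forall_norm_pow_sub_one_le {A : Type*} [NormedRing A] [NormedAlgebra ℝ A]
    {u : A} (h : ∀ m : ℕ, ‖u ^ m - 1‖ ≤ 1 / 2) : u = 1 := by
  have growth : ∀ k : ℕ, (3 / 2 : ℝ) ^ k * ‖u - 1‖ ≤ ‖u ^ (2 ^ k) - 1‖ := by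
    intro k
    induction k with
    | zero => simp
    | succ k ih =>
      set a := u ^ (2 ^ k) with ha
      have double : (2 : ℝ) • (a - 1) = (u ^ (2 ^ (k + 1)) - 1) - (a - 1) * (a - 1) := by
        rw [pow_succ, pow_mul, ← ha, two_smul]; noncomm_ring
      have h₁ : 2 * ‖a - 1‖ ≤ ‖u ^ (2 ^ (k + 1)) - 1‖ + ‖a - 1‖ * ‖a - 1‖ :=
        calc 2 * ‖a - 1‖ = ‖(2 : ℝ) • (a - 1)‖ := by simp [norm_smul]
          _ ≤ _ := by rw [double]; exact (norm_sub_le _ _).trans (by gcongr; exact norm_mul_le _ _)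
      have h₂ : ‖a - 1‖ ≤ 1 / 2 := h (2 ^ k)
      rw [pow_succ]
      nlinarith [norm_nonneg (a - 1)]
  by_contra hu
  have hpos : 0 < ‖u - 1‖ := norm_pos_iff.2 (sub_ne_zero.2 hu)
  obtain ⟨k, hk⟩ := pow_unbounded_of_one_lt (1 / ‖u - 1‖) (by norm_num : (1 : ℝ) < 3 / 2)
  rw [div_lt_iff₀ hpos] at hk
  linarith [growth k, h (2 ^ k)]

end PowerBounded

section Commutator

open scoped commutatorElement

variable {M R : Type*} [Monoid M] [NormedRing R]

theorem map_units_mul_map_inv (f : M →* R) (g : Mˣ) : f g * f (g⁻¹ : Mˣ) = 1 := by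
  rw [← map_mul, Units.mul_inv, map_one]

theorem norm_map_units_conj_sub_le (f : M →* R) (g : Mˣ) (x : M) (c : ℤ) :
    ‖f (g * x * (g⁻¹ : Mˣ)) - f x‖ ≤ 2 * ‖f g - 1‖ * ‖f x - c‖ * ‖f (g⁻¹ : Mˣ)‖ := by
  have hc : (c : R) * f g = f g * c := Int.cast_commute c (f g)
  have key : f (g * x * (g⁻¹ : Mˣ)) - f x
      = ((f g - 1) * (f x - c) - (f x - c) * (f g - 1)) * f (g⁻¹ : Mˣ) := by
    have expand : (f g - 1) * (f x - c) - (f x - c) * (f g - 1)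
        = f g * f x - f x * f g + (c * f g - f g * c) := by noncomm_ring
    rw [expand, hc, sub_self, add_zero, sub_mul, mul_assoc (f x), map_units_mul_map_inv, mul_one,
      map_mul, map_mul]
  calc _ ≤ ‖(f g - 1) * (f x - c) - (f x - c) * (f g - 1)‖ * ‖f (g⁻¹ : Mˣ)‖ := by
        rw [key]; exact norm_mul_le _ _
    _ ≤ (‖f g - 1‖ * ‖f x - c‖ + ‖f x - c‖ * ‖f g - 1‖) * ‖f (g⁻¹ : Mˣ)‖ := by
        gcongr
        exact (norm_sub_le _ _).trans (add_le_add (norm_mul_le _ _) (norm_mul_le _ _))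
    _ = _ := by ring

theorem norm_map_commutator_sub_one_le (f : M →* R) (g h : Mˣ) (c : ℤ) :
    ‖f (⁅g, h⁆ : Mˣ) - 1‖ ≤
      2 * ‖f g - 1‖ * ‖f h - c‖ * ‖f (g⁻¹ : Mˣ)‖ * ‖f (h⁻¹ : Mˣ)‖ := by
  have key : f (⁅g, h⁆ : Mˣ) - 1 = (f (g * h * (g⁻¹ : Mˣ)) - f h) * f (h⁻¹ : Mˣ) := by
    rw [sub_mul, map_units_mul_map_inv, ← map_mul, commutatorElement_def]
    simp only [Units.val_mul]
  calc _ ≤ ‖f (g * h * (g⁻¹ : Mˣ)) - f h‖ * ‖f (h⁻¹ : Mˣ)‖ := by rw [key]; exact norm_mul_le _ _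
    _ ≤ _ := by gcongr; exact norm_map_units_conj_sub_le f g h c

theorem norm_map_mul_sub_one_le (f : M →* R) (x y : M) :
    ‖f (x * y) - 1‖ ≤ ‖f x - 1‖ * ‖f y‖ + ‖f y - 1‖ :=
  calc _ = ‖(f x - 1) * f y + (f y - 1)‖ := by rw [map_mul]; noncomm_ring
    _ ≤ _ := (norm_add_le _ _).trans (by gcongr; exact norm_mul_le _ _)

theorem norm_map_inv_le_two [NormOneClass R] (f : M →* R) {g : Mˣ} (hg : ‖f g - 1‖ ≤ 1 / 2) :
    ‖f (g⁻¹ : Mˣ)‖ ≤ 2 := by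
  have hinv : f (g⁻¹ : Mˣ) = 1 - (f g - 1) * f (g⁻¹ : Mˣ) := by
    rw [sub_mul, map_units_mul_map_inv, one_mul, sub_sub_cancel]
  have : ‖f (g⁻¹ : Mˣ)‖ ≤ 1 + ‖f g - 1‖ * ‖f (g⁻¹ : Mˣ)‖ := by
    calc _ = ‖1 - (f g - 1) * f (g⁻¹ : Mˣ)‖ := by rw [← hinv]
      _ ≤ ‖(1 : R)‖ + ‖(f g - 1) * f (g⁻¹ : Mˣ)‖ := norm_sub_le _ _
      _ ≤ _ := by rw [norm_one]; gcongr; exact norm_mul_le _ _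
  nlinarith [norm_nonneg (f (g⁻¹ : Mˣ))]

theorem norm_map_commutator_sub_one_le_half_mul [NormOneClass R] (f : M →* R) {g h : Mˣ}
    (hg : ‖f g - 1‖ ≤ 1 / 2) (hh : 8 * ‖f h - 1‖ * ‖f (h⁻¹ : Mˣ)‖ ≤ 1) :
    ‖f (⁅g, h⁆ : Mˣ) - 1‖ ≤ 1 / 2 * ‖f g - 1‖ :=
  calc _ ≤ 2 * ‖f g - 1‖ * ‖f h - 1‖ * 2 * ‖f (h⁻¹ : Mˣ)‖ := by
        refine (norm_map_commutator_sub_one_le f g h 1).trans ?_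
        rw [Int.cast_one]
        gcongr
        exact norm_map_inv_le_two f hg
    _ = 1 / 2 * ‖f g - 1‖ * (8 * ‖f h - 1‖ * ‖f (h⁻¹ : Mˣ)‖) := by ring
    _ ≤ 1 / 2 * ‖f g - 1‖ * 1 := by gcongr
    _ = _ := mul_one _

theorem norm_map_iterate_commutator_sub_one_le [NormOneClass R] (f : M →* R) {g h : Mˣ}
    (hg : ‖f g - 1‖ ≤ 1 / 2) (hh : 8 * ‖f h - 1‖ * ‖f (h⁻¹ : Mˣ)‖ ≤ 1) (k : ℕ) :
    ‖f (((⁅·, h⁆)^[k] g : Mˣ)) - 1‖ ≤ (1 / 2) ^ (k + 1) := by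
  induction k with
  | zero => simpa using hg
  | succ k ih =>
    rw [Function.iterate_succ_apply', pow_succ' _ (k + 1)]
    refine (norm_map_commutator_sub_one_le_half_mul f (ih.trans ?_) hh).trans (by gcongr)
    exact pow_le_of_le_one (by norm_num) (by norm_num) k.succ_ne_zero

theorem tendsto_iterate_commutator {A B : Type*} [NormedRing A] [NormedAlgebra ℝ A]
    [FiniteDimensional ℝ A] [NormedRing B] [NormedAlgebra ℝ B] [NormOneClass B] {f : A →ₐ[ℝ] B}
    (hf : Function.Injective f) {g h : Aˣ} (hg : ‖f g - 1‖ ≤ 1 / 2)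
    (hh : 8 * ‖f h - 1‖ * ‖f (h⁻¹ : Aˣ)‖ ≤ 1) :
    Tendsto (fun k => (⁅·, h⁆)^[k] g) atTop (𝓝 1) := by
  have := FiniteDimensional.complete ℝ A
  obtain ⟨K, -, hK⟩ := f.toLinearMap.exists_antilipschitzWith (LinearMap.ker_eq_bot.2 hf)
  refine Units.isOpenEmbedding_val.tendsto_nhds_iff.2 ?_
  have hemb : IsClosedEmbedding f :=
    hK.isClosedEmbedding f.toLinearMap.toContinuousLinearMap.uniformContinuous
  refine hemb.tendsto_nhds_iff.2 (tendsto_iff_norm_sub_tendsto_zero.2 ?_)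
  refine squeeze_zero (g := fun k => (1 / 2 : ℝ) ^ (k + 1)) (fun _ => norm_nonneg _)
    (fun k => ?_) ?_
  · simpa using! norm_map_iterate_commutator_sub_one_le (f : A →* B) hg hh k
  · exact (tendsto_add_atTop_iff_nat 1).2
      (tendsto_pow_atTop_nhds_zero_of_lt_one (by norm_num) (by norm_num))

theorem commutator_pow_of_commute_conj {G : Type*} [Group G] {g h : G}
    (hcomm : Commute h (g * h * g⁻¹)) (m : ℕ) : ⁅g, h⁆ ^ m = ⁅g, h ^ m⁆ := by
  rw [commutatorElement_def, (Commute.inv_right hcomm.symm).mul_pow, conj_pow, inv_pow,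
    commutatorElement_def]

end Commutator

section BoundedDegeneration

open scoped commutatorElement

variable {A B : Type*} [NormedRing A] [NormedAlgebra ℝ A] [NormedRing B] [NormedAlgebra ℝ B]

/-- A bounded degeneration of a group `G` of units of an algebra `A`: a homomorphism `L` from `A`
to an algebra `B` which is a limit of injective homomorphisms and sends `G` into the ball of
radius `C`. It replaces the semisimplification of a faithful representation of `A`. -/
structure IsBoundedDegeneration (G : Subgroup Aˣ) (L : A →ₐ[ℝ] B) (C : ℝ) : Prop where
  bound : ∀ g ∈ G, ‖L g‖ ≤ C
  approx : ∀ δ > 0, ∃ φ : A →ₐ[ℝ] B, Function.Injective φ ∧ ∀ a, ‖φ a - L a‖ ≤ δ * ‖a‖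

namespace IsBoundedDegeneration

variable {G H : Subgroup Aˣ} {L : A →ₐ[ℝ] B} {C ε : ℝ}

theorem mono (hL : IsBoundedDegeneration G L C) (h : H ≤ G) : IsBoundedDegeneration H L C where
  bound g hg := hL.bound g (h hg)
  approx := hL.approx

theorem one_le [NormOneClass B] (hL : IsBoundedDegeneration G L C) : 1 ≤ C := by
  simpa using hL.bound 1 G.one_mem

theorem exists_injective_norm_sub_le (hL : IsBoundedDegeneration G L C) {s : Set A}
    (hs : Bornology.IsBounded s) {η : ℝ} (hη : 0 < η) :
    ∃ φ : A →ₐ[ℝ] B, Function.Injective φ ∧ ∀ a ∈ s, ‖φ a - L a‖ ≤ η := by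
  obtain ⟨R, hR, hsR⟩ := hs.exists_pos_norm_le
  obtain ⟨φ, hφ, hφL⟩ := hL.approx (η / R) (by positivity)
  refine ⟨φ, hφ, fun a ha => (hφL a).trans ?_⟩
  rw [div_mul_eq_mul_div, div_le_iff₀ hR]
  gcongr
  exact hsR a ha

theorem norm_map_commutator_sub_one_le [NormOneClass B] (hL : IsBoundedDegeneration G L C)
    (hε : 8 * ε * (C + 1) ^ 3 ≤ 1) {g h : Aˣ} (hg : g ∈ G) (hh : h ∈ G)
    (hgε : ‖L g - 1‖ ≤ ε) (hhε : ‖L h - 1‖ ≤ ε) : ‖L (⁅g, h⁆ : Aˣ) - 1‖ ≤ ε := by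
  have hC := hL.one_le
  have hε₀ : 0 ≤ ε := (norm_nonneg _).trans hgε
  calc _ ≤ 2 * ε * ε * C * C := by
        refine (_root_.norm_map_commutator_sub_one_le (L : A →* B) g h 1).trans ?_
        rw [Int.cast_one]
        gcongr
        · exact hgε
        · exact hhε
        · exact hL.bound _ (G.inv_mem hg)
        · exact hL.bound _ (G.inv_mem hh)
    _ = ε * (2 * ε * C ^ 2) := by ring
    _ ≤ ε * (8 * ε * (C + 1) ^ 3) := by
        gcongr ε * ?_
        calc 2 * ε * C ^ 2 ≤ 8 * ε * (C + 1) ^ 2 := by gcongr <;> linarith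
          _ ≤ 8 * ε * (C + 1) ^ 3 := by gcongr <;> linarith
    _ ≤ ε := mul_le_of_le_one_right hε₀ hε

theorem norm_map_iterate_commutator_sub_one_le [NormOneClass B]
    (hL : IsBoundedDegeneration G L C) (hε : 8 * ε * (C + 1) ^ 3 ≤ 1) {g h : Aˣ} (hg : g ∈ G)
    (hh : h ∈ G) (hgε : ‖L g - 1‖ ≤ ε) (hhε : ‖L h - 1‖ ≤ ε) (k : ℕ) :
    (⁅·, h⁆)^[k] g ∈ G ∧ ‖L ((⁅·, h⁆)^[k] g : Aˣ) - 1‖ ≤ ε := by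
  induction k with
  | zero => exact ⟨hg, hgε⟩
  | succ k ih =>
    rw [Function.iterate_succ_apply']
    exact ⟨G.mul_mem (G.mul_mem (G.mul_mem ih.1 hh) (G.inv_mem ih.1)) (G.inv_mem hh),
      hL.norm_map_commutator_sub_one_le hε ih.1 hh ih.2 hhε⟩

theorem commute_of_commute_conj [NormOneClass B] (hL : IsBoundedDegeneration G L C)
    (hG : ∀ g ∈ G, IsPowerBounded (g : A)) (hε₀ : 0 < ε)
    (hε : 8 * ε * (C + 1) ^ 3 ≤ 1) {g h : Aˣ} (hg : g ∈ G) (hh : h ∈ G)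
    (hgε : ‖L g - 1‖ ≤ ε) (hcomm : Commute h (g * h * g⁻¹)) : Commute g h := by
  have hC := hL.one_le
  obtain ⟨φ, hφ, hφL⟩ := hL.exists_injective_norm_sub_le
    (((hG h hh).union (hG h⁻¹ (G.inv_mem hh))).union
      (Set.toFinite {(g : A), ((g⁻¹ : Aˣ) : A)}).isBounded) (lt_min hε₀ one_pos)
  have norm_le : ∀ k ∈ G, ‖φ k - L k‖ ≤ min ε 1 → ‖φ k‖ ≤ C + 1 := fun k hk h₁ => by
    linarith [hL.bound k hk, norm_le_norm_add_norm_sub' (φ k) (L k), h₁.trans (min_le_right _ _)]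
  have hgφ : ‖φ g - 1‖ ≤ 2 * ε := by
    linarith [norm_sub_le_norm_sub_add_norm_sub (φ g) (L g) 1,
      (hφL g (by simp)).trans (min_le_left _ _)]
  have hone : φ (⁅g, h⁆ : Aˣ) = 1 := eq_one_of_forall_norm_pow_sub_one_le fun m => by
    have b₁ : ‖φ (h ^ m : Aˣ)‖ ≤ C + 1 :=
      norm_le _ (G.pow_mem hh m) (hφL _ (.inl (.inl ⟨m, rfl⟩)))
    have b₂ : ‖φ ((h ^ m)⁻¹ : Aˣ)‖ ≤ C + 1 :=
      norm_le _ (G.inv_mem (G.pow_mem hh m))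
        (hφL _ (.inl (.inr ⟨m, by rw [← inv_pow, Units.val_pow_eq_pow_val]⟩)))
    have b₃ : ‖φ (g⁻¹ : Aˣ)‖ ≤ C + 1 := norm_le _ (G.inv_mem hg) (hφL _ (by simp))
    rw [← map_pow, ← Units.val_pow_eq_pow_val, commutator_pow_of_commute_conj hcomm]
    calc _ ≤ 2 * (2 * ε) * (C + 1) * (C + 1) * (C + 1) := by
          refine (_root_.norm_map_commutator_sub_one_le (φ : A →* B) g (h ^ m) 0).trans ?_
          rw [Int.cast_zero, sub_zero]
          gcongr
          · exact hgφ
          · exact b₁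
          · exact b₃
          · exact b₂
      _ = 8 * ε * (C + 1) ^ 3 / 2 := by ring
      _ ≤ 1 / 2 := by gcongr
  exact commutatorElement_eq_one_iff_commute.1 (Units.ext (hφ (by simpa using hone)))

theorem eq_one_of_map_eq_one (hL : IsBoundedDegeneration G L C) {g : Aˣ}
    (hg : IsPowerBounded (g : A)) (h₁ : L g = 1) : g = 1 := by
  obtain ⟨φ, hφ, hφL⟩ := hL.exists_injective_norm_sub_le hg (one_half_pos (α := ℝ))
  have hone : φ (g : A) = 1 := eq_one_of_forall_norm_pow_sub_one_le fun m => by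
    simpa [h₁] using hφL _ ⟨m, rfl⟩
  exact Units.ext (hφ (by simpa using hone))

theorem tendsto_iterate_commutator [FiniteDimensional ℝ A] [NormOneClass B]
    (hL : IsBoundedDegeneration G L C) (hε₀ : 0 < ε) (hε : 8 * ε * (C + 1) ^ 3 ≤ 1) {g h : Aˣ}
    (hh : h ∈ G) (hgε : ‖L g - 1‖ ≤ ε) (hhε : ‖L h - 1‖ ≤ ε) :
    Tendsto (fun k => (⁅·, h⁆)^[k] g) atTop (𝓝 1) := by
  have hC := hL.one_le
  have hCε : 16 * ε * (C + 1) ≤ 1 := by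
    have : 2 ≤ (C + 1) ^ 2 := by nlinarith
    calc 16 * ε * (C + 1) = 8 * ε * (C + 1) * 2 := by ring
      _ ≤ 8 * ε * (C + 1) * (C + 1) ^ 2 := by gcongr
      _ = 8 * ε * (C + 1) ^ 3 := by ring
      _ ≤ 1 := hε
  obtain ⟨φ, hφ, hφL⟩ := hL.exists_injective_norm_sub_le
    (Set.toFinite {(g : A), (h : A), ((h⁻¹ : Aˣ) : A)}).isBounded (lt_min hε₀ one_pos)
  have norm_sub_one_le : ∀ k : Aˣ, ‖φ k - L k‖ ≤ min ε 1 → ‖L k - 1‖ ≤ ε → ‖φ k - 1‖ ≤ 2 * ε :=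
    fun k h₁ h₂ => by
      linarith [norm_sub_le_norm_sub_add_norm_sub (φ k) (L k) 1, h₁.trans (min_le_left _ _)]
  refine _root_.tendsto_iterate_commutator hφ ?_ ?_
  · exact (norm_sub_one_le g (hφL _ (by simp)) hgε).trans (by nlinarith)
  · have hinv : ‖φ (h⁻¹ : Aˣ)‖ ≤ C + 1 := by
      linarith [hL.bound _ (G.inv_mem hh), (hφL (h⁻¹ : Aˣ) (by simp)).trans (min_le_right _ _),
        norm_le_norm_add_norm_sub' (φ (h⁻¹ : Aˣ)) (L (h⁻¹ : Aˣ))]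
    calc _ ≤ 8 * (2 * ε) * (C + 1) := by
          gcongr
          exact norm_sub_one_le h (hφL _ (by simp)) hhε
      _ = 16 * ε * (C + 1) := by ring
      _ ≤ 1 := hCε

-- Zassenhaus: the iterated commutators `⁅…⁅⁅g, h⁆, h⁆…, h⁆` converge to `1`, hence become central,
-- and commutation with `h` is then inherited backwards along the sequence.
theorem commute_of_norm_map_sub_one_le [FiniteDimensional ℝ A] [NormOneClass B]
    (hL : IsBoundedDegeneration G L C) (hG : ∀ g ∈ G, IsPowerBounded (g : A)) (hε₀ : 0 < ε)
    (hε : 8 * ε * (C + 1) ^ 3 ≤ 1)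
    (hcen : ∀ᶠ g in 𝓝 (1 : Aˣ), g ∈ G → g ∈ Subgroup.centralizer (G : Set Aˣ))
    {g h : Aˣ} (hg : g ∈ G) (hh : h ∈ G) (hgε : ‖L g - 1‖ ≤ ε) (hhε : ‖L h - 1‖ ≤ ε) :
    Commute g h := by
  have near := hL.norm_map_iterate_commutator_sub_one_le hε hg hh hgε hhε
  obtain ⟨N, hN⟩ := ((hL.tendsto_iterate_commutator hε₀ hε hh hgε hhε).eventually hcen).exists
  have descend : ∀ k, Commute ((⁅·, h⁆)^[k] g) h → Commute g h := by
    intro k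
    induction k with
    | zero => exact id
    | succ k ih =>
      intro hk
      refine ih (hL.commute_of_commute_conj hG hε₀ hε (near k).1 hh (near k).2 ?_)
      rw [Function.iterate_succ_apply', commutatorElement_def] at hk
      simpa using hk.symm.mul_right (Commute.refl h)
  exact descend N (Subgroup.mem_centralizer_iff.1 (hN (near N).1) h hh).symm

theorem exists_norm_le_of_eventually [FiniteDimensional ℝ B] (hL : IsBoundedDegeneration G L C)
    {M : ℝ} (hM : ∀ᶠ g in comap (fun g : Aˣ => L g) (𝓝 1), g ∈ G → ‖(g : A)‖ ≤ M) :
    ∃ M', ∀ g ∈ G, ‖(g : A)‖ ≤ M' := by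
  have := FiniteDimensional.proper_real B
  have hC : 0 ≤ C := (norm_nonneg _).trans (hL.bound 1 G.one_mem)
  obtain ⟨ε, hε, hM⟩ := (Metric.nhds_basis_closedBall.comap _).eventually_iff.1 hM
  have hbdd : TotallyBounded ((fun g : Aˣ => L g) '' G) :=
    (isCompact_closedBall (0 : B) C).totallyBounded.subset
      (by rintro _ ⟨g, hg, rfl⟩; simpa using hL.bound g hg)
  obtain ⟨T, hTG, hT, hcover⟩ := Set.exists_subset_image_finite_and.1
    (Metric.finite_approx_of_totallyBounded hbdd (ε / (C + 1)) (by positivity))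
  obtain ⟨R, hR, hTR⟩ := (hT.image (fun g : Aˣ => (g : A))).isBounded.exists_pos_norm_le
  refine ⟨R * M, fun g hg => ?_⟩
  obtain ⟨t, ht, hgt⟩ : ∃ t ∈ T, ‖L g - L t‖ < ε / (C + 1) := by
    have hgT : L g ∈ _ := hcover ⟨g, hg, rfl⟩
    simpa only [Set.biUnion_image, Set.mem_iUnion₂, mem_ball_iff_norm, exists_prop] using hgT
  have near : ‖L (t⁻¹ * g : Aˣ) - 1‖ ≤ ε :=
    calc _ = ‖L (t⁻¹ : Aˣ) * (L g - L t)‖ := by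
          rw [mul_sub, ← map_mul, ← map_mul, Units.inv_mul, map_one, Units.val_mul]
      _ ≤ C * (ε / (C + 1)) := by
          refine (norm_mul_le _ _).trans ?_
          gcongr
          exact hL.bound _ (G.inv_mem (hTG ht))
      _ ≤ ε := by rw [mul_div_assoc', div_le_iff₀ (by positivity)]; nlinarith
  calc ‖(g : A)‖ = ‖(t : A) * (t⁻¹ * g : Aˣ)‖ := by rw [← Units.val_mul, mul_inv_cancel_left]
    _ ≤ R * M := by
        refine (norm_mul_le _ _).trans ?_
        gcongr
        · exact hTR _ ⟨t, ht, rfl⟩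
        · exact hM (mem_closedBall_iff_norm.2 near) (G.mul_mem (G.inv_mem (hTG ht)) hg)

end IsBoundedDegeneration

end BoundedDegeneration

section ExpUnit

variable {A : Type*} [NormedRing A] [NormedAlgebra ℝ A] [CompleteSpace A]

theorem exp_mul_exp_neg (X : A) : exp X * exp (-X) = 1 := by
  let _ := NormedAlgebra.restrictScalars ℚ ℝ A
  rw [← exp_add_of_commute (Commute.neg_right (Commute.refl X)), add_neg_cancel, exp_zero]

/-- The exponential map of a Banach algebra, with values in its group of units. -/
noncomputable def expUnit (X : A) : Aˣ where
  val := exp X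
  inv := exp (-X)
  val_inv := exp_mul_exp_neg X
  inv_val := by simpa using exp_mul_exp_neg (-X)

theorem coe_expUnit (X : A) : (expUnit X : A) = exp X := rfl

theorem expUnit_zero : expUnit (0 : A) = 1 := Units.ext exp_zero

theorem expUnit_neg (X : A) : expUnit (-X) = (expUnit X)⁻¹ := by ext; rfl

theorem expUnit_nsmul (m : ℕ) (X : A) : expUnit (m • X) = expUnit X ^ m := by
  let _ := NormedAlgebra.restrictScalars ℚ ℝ A
  exact Units.ext (by simpa using! exp_nsmul m X)

theorem expUnit_units_conj (g : Aˣ) (X : A) :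
    expUnit ((g : A) * X * (g⁻¹ : Aˣ)) = g * expUnit X * g⁻¹ := by
  let _ := NormedAlgebra.restrictScalars ℚ ℝ A
  exact Units.ext (by simpa using! exp_units_conj g X)

theorem continuous_expUnit : Continuous (expUnit : A → Aˣ) := by
  let _ := NormedAlgebra.restrictScalars ℚ ℝ A
  exact Units.continuous_iff.2 ⟨exp_continuous, exp_continuous.comp continuous_neg⟩

theorem hasDerivAt_exp_smul (X : A) (t : ℝ) :
    HasDerivAt (fun t : ℝ => exp (t • X)) (exp (t • X) * X) t :=
  hasDerivAt_exp_smul_const (𝕂 := ℝ) X t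

theorem hasDerivAt_exp_smul_zero (X : A) : HasDerivAt (fun t : ℝ => exp (t • X)) X 0 := by
  simpa using hasDerivAt_exp_smul X 0

theorem hasStrictFDerivAt_exp_comp_zero {E : Type*} [NormedAddCommGroup E] [NormedSpace ℝ E]
    (π : E →L[ℝ] A) : HasStrictFDerivAt (fun x => exp (π x)) π 0 :=
  HasStrictFDerivAt.comp (0 : E) (f := π) (g := (exp : A → A)) (g' := 1)
    (by simpa using! hasStrictFDerivAt_exp_zero (𝕂 := ℝ) (𝔸 := A)) π.hasStrictFDerivAt

theorem eq_of_forall_expUnit_smul_eq {X Y : A}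
    (h : ∀ t : ℝ, expUnit (t • X) = expUnit (t • Y)) : X = Y :=
  (hasDerivAt_exp_smul_zero X).unique <| by
    simpa only [← coe_expUnit, h] using hasDerivAt_exp_smul_zero Y

theorem commute_of_forall_commute_expUnit {X : A} {g : Aˣ}
    (h : ∀ t : ℝ, Commute g (expUnit (t • X))) : Commute (g : A) X := by
  refine (Units.mul_inv_eq_iff_eq_mul g).1 (eq_of_forall_expUnit_smul_eq fun t => ?_)
  rw [← smul_mul_assoc, ← mul_smul_comm, expUnit_units_conj, (h t).eq, mul_inv_cancel_right]

theorem commute_expUnit_right {X : A} {g : Aˣ} (h : Commute (g : A) X) :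
    Commute g (expUnit X) := by
  have hconj : (g : A) * X * (g⁻¹ : Aˣ) = X := (Units.mul_inv_eq_iff_eq_mul g).2 h
  have := expUnit_units_conj g X
  rw [hconj, eq_mul_inv_iff_mul_eq] at this
  exact this.symm

end ExpUnit

section LieAlgebra

attribute [local instance] LieRing.ofAssociativeRing

variable {A : Type*} [NormedRing A] [NormedAlgebra ℝ A] [CompleteSpace A] {G : Subgroup Aˣ}

theorem expUnit_smul_mem_of_tendsto (hcl : IsClosed (G : Set Aˣ)) {α : Type*}
    {l : Filter α} [l.NeBot] {Y : α → A} {r : α → ℝ} {X : A}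
    (hY : ∀ᶠ k in l, expUnit (Y k) ∈ G) (hr : Tendsto r l atTop)
    (hlim : Tendsto (fun k => r k • Y k) l (𝓝 X)) (t : ℝ) : expUnit (t • X) ∈ G := by
  have nonneg : ∀ t : ℝ, 0 ≤ t → expUnit (t • X) ∈ G := by
    intro t ht
    have hfloor : Tendsto (fun k => (⌊t * r k⌋₊ / r k : ℝ)) l (𝓝 t) :=
      (tendsto_nat_floor_mul_div_atTop ht).comp hr
    have hmul : Tendsto (fun k => ⌊t * r k⌋₊ • Y k) l (𝓝 (t • X)) := by
      refine (hfloor.smul hlim).congr' ?_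
      filter_upwards [hr.eventually_gt_atTop 0] with k hk
      rw [smul_smul, div_mul_cancel₀ _ hk.ne', Nat.cast_smul_eq_nsmul]
    refine hcl.mem_of_tendsto ((continuous_expUnit.tendsto _).comp hmul) ?_
    filter_upwards [hY] with k hk
    simpa only [Function.comp_apply, expUnit_nsmul] using! G.pow_mem hk _
  rcases le_total 0 t with ht | ht
  · exact nonneg t ht
  · have := G.inv_mem (nonneg (-t) (by linarith))
    rwa [← expUnit_neg, neg_smul, neg_neg] at this

theorem expUnit_smul_mem_of_tendsto_sub_one (hcl : IsClosed (G : Set Aˣ))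
    {α : Type*} {l : Filter α} [l.NeBot] {g : α → Aˣ} {r : α → ℝ} {X : A}
    (hg : ∀ᶠ k in l, g k ∈ G) (hr : Tendsto r l atTop)
    (hlim : Tendsto (fun k => r k • ((g k : A) - 1)) l (𝓝 X)) (t : ℝ) : expUnit (t • X) ∈ G := by
  have hexp : HasStrictFDerivAt (exp : A → A)
      ((ContinuousLinearEquiv.refl ℝ A : A ≃L[ℝ] A) : A →L[ℝ] A) 0 :=
    hasStrictFDerivAt_exp_zero
  let log : A → A := hexp.localInverse _ _ _
  have hlog : HasStrictFDerivAt log (1 : A →L[ℝ] A) 1 := by simpa using! hexp.to_localInverse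
  have exp_log : ∀ᶠ a in 𝓝 (1 : A), exp (log a) = a := by
    simpa using hexp.eventually_right_inverse
  have log_one : log 1 = 0 := by simpa using hexp.localInverse_apply_image
  have hsub : Tendsto (fun k => (g k : A) - 1) l (𝓝 0) := by
    have hzero := (tendsto_inv_atTop_zero.comp hr).smul hlim
    rw [zero_smul] at hzero
    refine hzero.congr' ?_
    filter_upwards [hr.eventually_gt_atTop 0] with k hk
    simp [smul_smul, inv_mul_cancel₀ hk.ne']
  have hg₁ : Tendsto (fun k => (g k : A)) l (𝓝 1) := by simpa using hsub.add_const 1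
  have hlim' := hlog.hasFDerivAt.hasFDerivWithinAt.lim (s := Set.univ) hsub (by simp) hlim
  simp only [add_sub_cancel, log_one, sub_zero] at hlim'
  refine expUnit_smul_mem_of_tendsto hcl (Y := fun k => log (g k)) ?_ hr hlim' t
  filter_upwards [hg, hg₁.eventually exp_log] with k hk hk'
  rwa [show expUnit (log (g k)) = g k from Units.ext hk']

/-- The generators of the one-parameter subgroups of a closed group of units. -/
noncomputable def oneParameterGenerators (G : Subgroup Aˣ) (hcl : IsClosed (G : Set Aˣ)) :
    Submodule ℝ A where
  carrier := {X | ∀ t : ℝ, expUnit (t • X) ∈ G}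
  zero_mem' t := by rw [smul_zero, expUnit_zero]; exact G.one_mem
  smul_mem' c X hX t := by rw [smul_smul]; exact hX _
  add_mem' := by
    intro X Y hX hY
    have hder := ((hasDerivAt_exp_smul_zero X).mul
      (hasDerivAt_exp_smul_zero Y)).tendsto_slope_zero_right
    refine expUnit_smul_mem_of_tendsto_sub_one hcl (l := 𝓝[>] (0 : ℝ))
      (g := fun t => expUnit (t • X) * expUnit (t • Y)) (r := fun t => t⁻¹)
      (Eventually.of_forall fun t => G.mul_mem (hX t) (hY t)) tendsto_inv_nhdsGT_zero ?_
    simpa [coe_expUnit, add_comm] using hder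

variable {hcl : IsClosed (G : Set Aˣ)} {X Y : A}

theorem conj_mem_oneParameterGenerators (hX : X ∈ oneParameterGenerators G hcl) {g : Aˣ}
    (hg : g ∈ G) : (g : A) * X * (g⁻¹ : Aˣ) ∈ oneParameterGenerators G hcl := by
  intro t
  rw [← smul_mul_assoc, ← mul_smul_comm, expUnit_units_conj]
  exact G.mul_mem (G.mul_mem hg (hX t)) (G.inv_mem hg)

theorem hasDerivAt_exp_conj (X Y : A) (t : ℝ) :
    HasDerivAt (fun t : ℝ => exp (t • X) * Y * exp (t • -X))
      (exp (t • X) * ⁅X, Y⁆ * exp (t • -X)) t := by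
  refine (((hasDerivAt_exp_smul X t).mul_const Y).mul (hasDerivAt_exp_smul (-X) t)).congr_deriv ?_
  have hcomm : exp (t • -X) * X = X * exp (t • -X) :=
    ((Commute.neg_left (Commute.refl X)).smul_left t).exp_left
  rw [mul_neg, hcomm, Ring.lie_def]
  noncomm_ring

variable [FiniteDimensional ℝ A]

theorem lie_mem_oneParameterGenerators (hX : X ∈ oneParameterGenerators G hcl)
    (hY : Y ∈ oneParameterGenerators G hcl) : ⁅X, Y⁆ ∈ oneParameterGenerators G hcl := by
  have hder : HasDerivAt (fun t : ℝ => exp (t • X) * Y * exp (t • -X)) ⁅X, Y⁆ 0 := by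
    simpa using hasDerivAt_exp_conj X Y 0
  refine (oneParameterGenerators G hcl).closed_of_finiteDimensional.mem_of_tendsto
    hder.tendsto_slope_zero_right (Eventually.of_forall fun t => ?_)
  refine Submodule.smul_mem _ _ (Submodule.sub_mem _ ?_ ?_)
  · have := conj_mem_oneParameterGenerators hY (hX (0 + t))
    rwa [← expUnit_neg, ← smul_neg] at this
  · simpa using hY

/-- The Lie algebra of a closed group of units. -/
noncomputable def lieAlgebraOf (G : Subgroup Aˣ) (hcl : IsClosed (G : Set Aˣ)) :
    LieSubalgebra ℝ A where
  toSubmodule := oneParameterGenerators G hcl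
  lie_mem' := lie_mem_oneParameterGenerators

theorem mem_lieAlgebraOf : X ∈ lieAlgebraOf G hcl ↔ ∀ t : ℝ, expUnit (t • X) ∈ G := Iff.rfl

theorem expUnit_mem_of_mem_lieAlgebraOf (hX : X ∈ lieAlgebraOf G hcl) : expUnit X ∈ G := by
  simpa using mem_lieAlgebraOf.1 hX 1

theorem conj_mem_lieAlgebraOf (hX : X ∈ lieAlgebraOf G hcl) {g : Aˣ} (hg : g ∈ G) :
    (g : A) * X * (g⁻¹ : Aˣ) ∈ lieAlgebraOf G hcl :=
  conj_mem_oneParameterGenerators (hcl := hcl) hX hg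

-- Otherwise the directions of small logarithms in `m` accumulate at a unit vector of `m`, which
-- generates a one-parameter subgroup of `G`.
theorem eventually_eq_zero_of_expUnit_mem {m : Submodule ℝ A}
    (hm : Disjoint (lieAlgebraOf G hcl).toSubmodule m) :
    ∀ᶠ Y : m in 𝓝 0, expUnit (Y : A) ∈ G → Y = 0 := by
  by_contra hcon
  obtain ⟨l, hl⟩ := exists_ultrafilter_iff.2 (frequently_iff_neBot.1 (not_eventually.1 hcon))
  have hlim : Tendsto (fun Y : m => (Y : A)) l (𝓝 0) :=
    (continuous_subtype_val.tendsto (0 : m)).mono_left (hl.trans inf_le_left)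
  have hmem : ∀ᶠ Y : m in l, expUnit (Y : A) ∈ G ∧ Y ≠ 0 :=
    Filter.Eventually.mono (le_principal_iff.1 (hl.trans inf_le_right)) fun Y hY => by
      simpa using! hY
  have := FiniteDimensional.proper_real A
  obtain ⟨X, hX, hlX⟩ := (isCompact_sphere (0 : A) 1).ultrafilter_le_nhds
    (l.map fun Y : m => ‖(Y : A)‖⁻¹ • (Y : A)) <| by
      rw [le_principal_iff]
      change ∀ᶠ Y : m in l, ‖(Y : A)‖⁻¹ • (Y : A) ∈ Metric.sphere (0 : A) 1
      filter_upwards [hmem] with Y hY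
      have : (Y : A) ≠ 0 := by simpa using hY.2
      simp [norm_smul, this]
  have hr : Tendsto (fun Y : m => ‖(Y : A)‖⁻¹) l atTop := by
    refine tendsto_inv_nhdsGT_zero.comp (tendsto_nhdsWithin_iff.2 ⟨by simpa using hlim.norm, ?_⟩)
    filter_upwards [hmem] with Y hY
    simpa using hY.2
  have hXG : X ∈ lieAlgebraOf G hcl :=
    fun t => expUnit_smul_mem_of_tendsto hcl (hmem.mono fun Y hY => hY.1) hr hlX t
  have hXm : X ∈ m := m.closed_of_finiteDimensional.mem_of_tendsto (b := (l : Filter m)) hlX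
    (Eventually.of_forall fun Y => m.smul_mem _ Y.2)
  have : X = 0 := Submodule.disjoint_def.1 hm X hXG hXm
  simp [this] at hX

theorem map_expUnit_mul_expUnit_nhds {p q : Submodule ℝ A} (hpq : IsCompl p q) :
    map (fun x : p × q => expUnit (x.1 : A) * expUnit (x.2 : A)) (𝓝 0) = 𝓝 1 := by
  let π₁ : p × q →L[ℝ] A := p.subtypeL.comp (ContinuousLinearMap.fst ℝ p q)
  let π₂ : p × q →L[ℝ] A := q.subtypeL.comp (ContinuousLinearMap.snd ℝ p q)
  have hF : HasStrictFDerivAt (fun x : p × q => exp (π₁ x) * exp (π₂ x)) (π₁ + π₂) 0 := by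
    refine ((hasStrictFDerivAt_exp_comp_zero π₁).mul'
      (hasStrictFDerivAt_exp_comp_zero π₂)).congr_fderiv ?_
    simp [add_comm]
  have hsurj : (π₁ + π₂).range = ⊤ := by
    refine eq_top_iff.2 fun a _ => ?_
    obtain ⟨x, hx, y, hy, rfl⟩ := Submodule.mem_sup.1
      (hpq.sup_eq_top ▸ Submodule.mem_top : a ∈ p ⊔ q)
    exact ⟨(⟨x, hx⟩, ⟨y, hy⟩), rfl⟩
  have hmap := hF.map_nhds_eq_of_surj hsurj
  simp only [map_zero, exp_zero, mul_one] at hmap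
  refine Filter.map_injective Units.val_injective ?_
  rw [Units.isOpenEmbedding_val.map_nhds_eq, Filter.map_map, Units.val_one, ← hmap]
  rfl

-- Cartan's closed subgroup theorem.
theorem eventually_exists_expUnit_eq (hcl : IsClosed (G : Set Aˣ)) :
    ∀ᶠ g in 𝓝 (1 : Aˣ), g ∈ G → ∃ X ∈ lieAlgebraOf G hcl, expUnit X = g := by
  obtain ⟨m, hm⟩ := (lieAlgebraOf G hcl).toSubmodule.exists_isCompl
  rw [← map_expUnit_mul_expUnit_nhds hm, eventually_map]
  filter_upwards [(continuous_snd.tendsto' 0 0 rfl).eventually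
    (eventually_eq_zero_of_expUnit_mem hm.disjoint)] with x hx hxG
  have hx₁ : expUnit (x.1 : A) ∈ G := expUnit_mem_of_mem_lieAlgebraOf x.1.2
  have hx₂ : x.2 = 0 := hx ((G.mul_mem_cancel_left hx₁).1 hxG)
  exact ⟨x.1, x.1.2, by simp [hx₂, expUnit_zero]⟩

theorem eventually_mem_centralizer (hcomm : ∀ X ∈ lieAlgebraOf G hcl, ∀ g ∈ G, Commute (g : A) X) :
    ∀ᶠ g in 𝓝 (1 : Aˣ), g ∈ G → g ∈ Subgroup.centralizer (G : Set Aˣ) := by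
  filter_upwards [eventually_exists_expUnit_eq hcl] with g hg hgG
  obtain ⟨X, hX, rfl⟩ := hg hgG
  exact Subgroup.mem_centralizer_iff.2 fun h hh => commute_expUnit_right (hcomm X hX h hh)

end LieAlgebra

section Slice

attribute [local instance] LieRing.ofAssociativeRing

variable {A : Type*} [NormedRing A] [NormedAlgebra ℝ A] [CompleteSpace A]

theorem exp_conj_smul_of_commute_lie {X Y : A} (h : Commute X ⁅X, Y⁆) (t : ℝ) :
    exp (t • X) * Y * exp (t • -X) = Y + t • ⁅X, Y⁆ := by
  have hder : ∀ t : ℝ, HasDerivAt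
      (fun t : ℝ => exp (t • X) * Y * exp (t • -X) - t • ⁅X, Y⁆) 0 t := fun t => by
    refine ((hasDerivAt_exp_conj X Y t).sub ((hasDerivAt_id t).smul_const _)).congr_deriv ?_
    rw [((h.smul_left t).exp_left : Commute (exp (t • X)) _).eq, mul_assoc, smul_neg,
      exp_mul_exp_neg, mul_one, one_smul, sub_self]
  rw [← sub_eq_iff_eq_add]
  simpa using is_const_of_deriv_eq_zero (fun t => (hder t).differentiableAt)
    (fun t => (hder t).deriv) t 0

-- Otherwise `exp (m X) Y exp (-m X) = Y + m [X, Y]` would grow linearly in `m`.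
theorem lie_eq_zero_of_commute_lie {X Y : A} (hX : IsPowerBounded (expUnit X : A))
    (hX' : IsPowerBounded (expUnit (-X) : A)) (h : Commute X ⁅X, Y⁆) : ⁅X, Y⁆ = 0 := by
  obtain ⟨R, hR, hRX⟩ := hX.exists_pos_norm_le
  obtain ⟨R', -, hRX'⟩ := hX'.exists_pos_norm_le
  have hbound : ∀ m : ℕ, m * ‖⁅X, Y⁆‖ ≤ R * ‖Y‖ * R' + ‖Y‖ := fun m => by
    have hm : (m : ℝ) • ⁅X, Y⁆ = (expUnit X : A) ^ m * Y * (expUnit (-X) : A) ^ m - Y := by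
      rw [eq_sub_iff_add_eq', ← exp_conj_smul_of_commute_lie h, Nat.cast_smul_eq_nsmul,
        Nat.cast_smul_eq_nsmul, ← coe_expUnit, ← coe_expUnit, expUnit_nsmul, expUnit_nsmul,
        Units.val_pow_eq_pow_val, Units.val_pow_eq_pow_val]
    calc m * ‖⁅X, Y⁆‖ = ‖(m : ℝ) • ⁅X, Y⁆‖ := by rw [norm_smul, Real.norm_natCast]
      _ ≤ ‖(expUnit X : A) ^ m‖ * ‖Y‖ * ‖(expUnit (-X) : A) ^ m‖ + ‖Y‖ := by
        rw [hm]; exact (norm_sub_le _ _).trans (by gcongr; exact norm_mul₃_le)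
      _ ≤ _ := by
        gcongr
        · exact hRX _ ⟨m, rfl⟩
        · exact hRX' _ ⟨m, rfl⟩
  by_contra hne
  obtain ⟨m, hm⟩ := exists_nat_gt ((R * ‖Y‖ * R' + ‖Y‖) / ‖⁅X, Y⁆‖)
  rw [div_lt_iff₀ (norm_pos_iff.2 hne)] at hm
  exact (hbound m).not_gt hm

variable [FiniteDimensional ℝ A] {G : Subgroup Aˣ} {hcl : IsClosed (G : Set Aˣ)}

theorem isCompl_range_ker_ad (hG : ∀ g ∈ G, IsPowerBounded (g : A)) (X : lieAlgebraOf G hcl) :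
    IsCompl (LinearMap.range (LieAlgebra.ad ℝ (lieAlgebraOf G hcl) X))
      (LinearMap.ker (LieAlgebra.ad ℝ (lieAlgebraOf G hcl) X)) := by
  set D := LieAlgebra.ad ℝ (lieAlgebraOf G hcl) X
  have hdisj : Disjoint (LinearMap.range D) (LinearMap.ker D) := by
    rw [Submodule.disjoint_def]
    rintro _ ⟨Y, rfl⟩ hY
    have hcomm : Commute (X : A) ⁅(X : A), (Y : A)⁆ :=
      sub_eq_zero.1 (congrArg Subtype.val hY)
    exact Subtype.ext (lie_eq_zero_of_commute_lie (hG _ (expUnit_mem_of_mem_lieAlgebraOf X.2))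
      (hG _ (expUnit_mem_of_mem_lieAlgebraOf (neg_mem X.2))) hcomm)
  exact ⟨hdisj, codisjoint_iff.2 (Submodule.eq_top_of_disjoint _ _
    (LinearMap.finrank_range_add_finrank_ker D).ge hdisj)⟩

theorem map_exp_conj_nhds {𝔤 : LieSubalgebra ℝ A} {X : 𝔤}
    (hX : Codisjoint (LinearMap.range (LieAlgebra.ad ℝ 𝔤 X)) (LinearMap.ker (LieAlgebra.ad ℝ 𝔤 X)))
    (hconj : ∀ Y ∈ 𝔤, ∀ V ∈ 𝔤, exp Y * V * exp (-Y) ∈ 𝔤) :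
    map (fun p : 𝔤 × LinearMap.ker (LieAlgebra.ad ℝ 𝔤 X) =>
      exp (p.1 : A) * (X + p.2 : 𝔤) * exp (-p.1 : A)) (𝓝 0) = 𝓝[(𝔤 : Set A)] (X : A) := by
  set 𝔥 := LinearMap.ker (LieAlgebra.ad ℝ 𝔤 X)
  let p₁ : 𝔤 × 𝔥 →L[ℝ] A := 𝔤.toSubmodule.subtypeL.comp (ContinuousLinearMap.fst ℝ 𝔤 𝔥)
  let p₂ : 𝔤 × 𝔥 →L[ℝ] A :=
    𝔤.toSubmodule.subtypeL.comp (𝔥.subtypeL.comp (ContinuousLinearMap.snd ℝ 𝔤 𝔥))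
  obtain ⟨π, hπ⟩ : ∃ π : A →L[ℝ] 𝔤, ∀ V : 𝔤, π V = V :=
    Submodule.ClosedComplemented.of_finiteDimensional 𝔤.toSubmodule
  have hπ' : ∀ p : 𝔤 × 𝔥, (π (exp (p₁ p) * (X + p₂ p) * exp (-p₁ p)) : A)
      = exp (p₁ p) * (X + p₂ p) * exp (-p₁ p) := fun p =>
    congrArg Subtype.val (hπ ⟨_, hconj _ p.1.2 _ (X + p.2 : 𝔤).2⟩)
  have hΦ : HasStrictFDerivAt (fun p => exp (p₁ p) * (X + p₂ p) * exp (-p₁ p))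
      (MulOpposite.op (X : A) • p₁ - (X : A) • p₁ + p₂) 0 := by
    have h₂ := p₂.hasStrictFDerivAt (x := 0).const_add (X : A)
    refine (((hasStrictFDerivAt_exp_comp_zero p₁).mul' h₂).mul'
      (hasStrictFDerivAt_exp_comp_zero (-p₁))).congr_fderiv ?_
    simp only [Pi.mul_apply, map_zero, exp_zero, add_zero, one_mul, smul_neg,
      MulOpposite.op_one, one_smul, smul_add]
    abel
  have hmap := (π.hasStrictFDerivAt.comp 0 hΦ).map_nhds_eq_of_surj <| by
    refine eq_top_iff.2 fun V _ => ?_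
    obtain ⟨_, ⟨Y, rfl⟩, Z, hZ, rfl⟩ := Submodule.mem_sup.1
      (hX.eq_top ▸ Submodule.mem_top : V ∈ _)
    refine ⟨(-Y, ⟨Z, hZ⟩), ?_⟩
    rw [← hπ (_ + _)]
    refine congrArg π ?_
    change -(Y : A) * X - X * -Y + Z = (X * Y - Y * X) + (Z : A)
    noncomm_ring
  simp only [map_zero, neg_zero, exp_zero, one_mul, mul_one, add_zero, hπ] at hmap
  rw [nhdsWithin_eq_map_subtype_coe X.2, Subtype.coe_eta, ← hmap, Filter.map_map]
  exact congrArg (map · _) (funext fun p => (hπ' p).symm)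

theorem eventually_commute_expUnit_conj (hG : ∀ g ∈ G, IsPowerBounded (g : A)) {X : A}
    (hX : X ∈ lieAlgebraOf G hcl) {P : A → Prop} (hP : ∀ᶠ Y in 𝓝 0, P Y) :
    ∀ᶠ V in 𝓝[(lieAlgebraOf G hcl : Set A)] X, ∃ Y ∈ lieAlgebraOf G hcl, P Y ∧
      Commute X ((expUnit (-Y) : A) * V * expUnit Y) := by
  rw [← map_exp_conj_nhds (X := ⟨X, hX⟩) (isCompl_range_ker_ad hG _).codisjoint
    (fun Y hY V hV => conj_mem_lieAlgebraOf hV (expUnit_mem_of_mem_lieAlgebraOf hY)),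
    eventually_map]
  have hfst : Tendsto (fun p : lieAlgebraOf G hcl × LinearMap.ker
      (LieAlgebra.ad ℝ (lieAlgebraOf G hcl) ⟨X, hX⟩) => (p.1 : A)) (𝓝 0) (𝓝 0) :=
    Continuous.tendsto' (by fun_prop) _ _ rfl
  filter_upwards [hfst.eventually hP] with ⟨Y, Z⟩ hY
  refine ⟨Y, Y.2, hY, ?_⟩
  have hconj : (expUnit (-Y : A) : A) * (expUnit (Y : A) * (X + Z) * expUnit (-Y : A))
      * expUnit (Y : A) = X + Z := by
    simp [expUnit_neg, mul_assoc]
  refine hconj ▸ (Commute.refl X).add_right ?_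
  exact sub_eq_zero.1 (congrArg Subtype.val Z.2)

end Slice

section CommutingPowerBounded

theorem IsPowerBounded.norm_le_one_of_mem_spectrum {A : Type*} [NormedRing A] [NormedAlgebra ℂ A]
    [CompleteSpace A] {a : A} (ha : IsPowerBounded a) {μ : ℂ} (hμ : μ ∈ spectrum ℂ a) :
    ‖μ‖ ≤ 1 := by
  obtain ⟨R, -, hR⟩ := ha.exists_pos_norm_le
  by_contra! h
  obtain ⟨m, hm⟩ := pow_unbounded_of_one_lt (R * ‖(1 : A)‖) h
  refine hm.not_ge ?_
  calc ‖μ‖ ^ m = ‖μ ^ m‖ := (norm_pow μ m).symm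
    _ ≤ ‖a ^ m‖ * ‖(1 : A)‖ := spectrum.norm_le_norm_mul_of_mem (spectrum.pow_mem_pow a m hμ)
    _ ≤ R * ‖(1 : A)‖ := by gcongr; exact hR _ ⟨m, rfl⟩

theorem norm_eq_one_of_mem_spectrum {A : Type*} [NormedRing A] [NormedAlgebra ℂ A]
    [CompleteSpace A] {u : Aˣ} (hu : IsPowerBounded (u : A)) (hu' : IsPowerBounded (u⁻¹ : Aˣ).val)
    {μ : ℂ} (hμ : μ ∈ spectrum ℂ (u : A)) : ‖μ‖ = 1 := by
  have hμ₀ : μ ≠ 0 := spectrum.ne_zero_of_mem_of_unit hμ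
  have hinv : μ⁻¹ ∈ spectrum ℂ (u⁻¹ : Aˣ).val :=
    (spectrum.inv_mem_iff (r := Units.mk0 μ hμ₀)).1 hμ
  refine le_antisymm (hu.norm_le_one_of_mem_spectrum hμ) ?_
  have := hu'.norm_le_one_of_mem_spectrum hinv
  rwa [norm_inv, inv_le_one₀ (norm_pos_iff.2 hμ₀)] at this

open Module.End

variable {V : Type*} [NormedAddCommGroup V] [NormedSpace ℂ V]

theorem pow_apply_of_sub_smul_mem_eigenspace {f : Module.End ℂ V} {μ : ℂ} {v w : V}
    (hv : f v = μ • v + w) (hw : f w = μ • w) (m : ℕ) :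
    (f ^ m) v = μ ^ m • v + (m * μ ^ (m - 1)) • w := by
  induction m with
  | zero => simp
  | succ m ih =>
    rw [pow_succ', Module.End.mul_apply, ih, map_add, map_smul, map_smul, hv, hw]
    rcases m with _ | m
    · simp
    · push_cast [Nat.add_sub_cancel]
      module

theorem norm_eq_one_of_hasEigenvalue [FiniteDimensional ℂ V] {u : (V →L[ℂ] V)ˣ}
    (hu : IsPowerBounded (u : V →L[ℂ] V))
    (hu' : IsPowerBounded (u⁻¹ : (V →L[ℂ] V)ˣ).val) {μ : ℂ}
    (hμ : HasEigenvalue (u : V →ₗ[ℂ] V) μ) : ‖μ‖ = 1 := by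
  have := FiniteDimensional.complete ℂ V
  refine norm_eq_one_of_mem_spectrum hu hu' ?_
  have h := AlgEquiv.spectrum_eq (Module.End.toContinuousLinearMap V) (u : V →ₗ[ℂ] V)
  exact h.symm ▸ hμ.mem_spectrum

theorem sub_smul_apply_eq_zero_of_isPowerBounded {f : V →L[ℂ] V} (hf : IsPowerBounded f) {μ : ℂ}
    (hμ : ‖μ‖ = 1) {v w : V} (hv : f v = μ • v + w) (hw : f w = μ • w) : w = 0 := by
  obtain ⟨R, -, hR⟩ := hf.exists_pos_norm_le
  have bound (m : ℕ) : m * ‖w‖ ≤ (R + 1) * ‖v‖ := by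
    have happly : (f ^ m) v = μ ^ m • v + (m * μ ^ (m - 1)) • w := by
      have := pow_apply_of_sub_smul_mem_eigenspace (f := (f : V →ₗ[ℂ] V)) hv hw m
      rwa [← ContinuousLinearMap.toLinearMap_pow] at this
    calc m * ‖w‖ = ‖(m * μ ^ (m - 1)) • w‖ := by simp [norm_smul, hμ]
      _ = ‖(f ^ m) v - μ ^ m • v‖ := by rw [happly, add_sub_cancel_left]
      _ ≤ ‖f ^ m‖ * ‖v‖ + ‖v‖ := by
          refine (norm_sub_le _ _).trans (add_le_add ((f ^ m).le_opNorm v) ?_)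
          simp [norm_smul, hμ]
      _ ≤ (R + 1) * ‖v‖ := by
          rw [add_one_mul]
          gcongr
          exact hR _ ⟨m, rfl⟩
  by_contra hw₀
  obtain ⟨m, hm⟩ := exists_nat_gt ((R + 1) * ‖v‖ / ‖w‖)
  exact (((div_lt_iff₀ (norm_pos_iff.2 hw₀)).1 hm).trans_le (bound m)).false

variable [FiniteDimensional ℂ V]

theorem maxGenEigenspace_eq_eigenspace_of_isPowerBounded {u : (V →L[ℂ] V)ˣ}
    (hu : IsPowerBounded (u : V →L[ℂ] V)) (hu' : IsPowerBounded (u⁻¹ : (V →L[ℂ] V)ˣ).val) (μ : ℂ) :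
    maxGenEigenspace (u : V →ₗ[ℂ] V) μ = eigenspace (u : V →ₗ[ℂ] V) μ := by
  have sub_apply (v : V) : ((u : V →ₗ[ℂ] V) - μ • 1 : Module.End ℂ V) v = u.val v - μ • v := rfl
  have ker_sq (v : V) (hv : u.val (u.val v - μ • v) = μ • (u.val v - μ • v)) :
      u.val v - μ • v = 0 := by
    by_contra hw
    have hμ := norm_eq_one_of_hasEigenvalue hu hu'
      (hasEigenvalue_of_hasEigenvector ⟨mem_eigenspace_iff.2 hv, hw⟩)
    exact hw (sub_smul_apply_eq_zero_of_isPowerBounded hu hμ (add_sub_cancel _ _).symm hv)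
  refine le_antisymm (fun v hv => ?_) ((genEigenspace _ μ).monotone le_top)
  obtain ⟨k, hk⟩ := (mem_maxGenEigenspace _ _ _).1 hv
  induction k with
  | zero => simp_all
  | succ k ih =>
    rcases k with _ | k
    · rw [zero_add, pow_one, sub_apply] at hk
      exact mem_eigenspace_iff.2 (sub_eq_zero.1 hk)
    · refine ih ?_
      rw [pow_succ', pow_succ', mul_apply, mul_apply, sub_apply, sub_apply] at hk
      rw [pow_succ', mul_apply, sub_apply]
      exact ker_sq _ (sub_eq_zero.1 hk)

theorem exists_norm_le_of_pairwise_commute_clm {W : Set (V →L[ℂ] V)ˣ}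
    (hcomm : ∀ u ∈ W, ∀ v ∈ W, Commute u v)
    (hW : ∀ u ∈ W, IsPowerBounded (u : V →L[ℂ] V) ∧ IsPowerBounded (u⁻¹ : (V →L[ℂ] V)ˣ).val) :
    ∃ M, ∀ u ∈ W, ‖(u : V →L[ℂ] V)‖ ≤ M := by
  have := FiniteDimensional.complete ℂ V
  have hspan : ⨆ χ : W → ℂ, ⨅ u, maxGenEigenspace (u.1.val : V →ₗ[ℂ] V) (χ u) = ⊤ :=
    iSup_iInf_maxGenEigenspace_eq_top_of_iSup_maxGenEigenspace_eq_top_of_commute _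
      (fun u v _ => congrArg ContinuousLinearMap.toLinearMap
        (Units.ext_iff.1 (hcomm u u.2 v v.2)))
      fun u => iSup_maxGenEigenspace_eq_top _
  have pointwise (v : V) : ∃ c, ∀ u : W, ‖u.1.val v‖ ≤ c := by
    have hv : v ∈ ⨆ χ : W → ℂ, ⨅ u, maxGenEigenspace (u.1.val : V →ₗ[ℂ] V) (χ u) :=
      hspan ▸ Submodule.mem_top
    induction hv using Submodule.iSup_induction' with
    | mem χ v hv =>
      refine ⟨‖v‖, fun u => ?_⟩
      have hvu : v ∈ eigenspace (u.1.val : V →ₗ[ℂ] V) (χ u) := by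
        rw [← maxGenEigenspace_eq_eigenspace_of_isPowerBounded (hW u u.2).1 (hW u u.2).2]
        exact Submodule.mem_iInf _ |>.1 hv u
      rcases eq_or_ne v 0 with rfl | hv₀
      · simp
      · have hχ := norm_eq_one_of_hasEigenvalue (hW u u.2).1 (hW u u.2).2
          (hasEigenvalue_of_hasEigenvector ⟨hvu, hv₀⟩)
        have happly : u.1.val v = χ u • v := mem_eigenspace_iff.1 hvu
        rw [happly, norm_smul, hχ, one_mul]
    | zero => exact ⟨0, by simp⟩
    | add v w _ _ hv hw =>
      obtain ⟨c, hc⟩ := hv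
      obtain ⟨d, hd⟩ := hw
      exact ⟨c + d, fun u => by rw [map_add]; exact norm_add_le_of_le (hc u) (hd u)⟩
  obtain ⟨M, hM⟩ := banach_steinhaus pointwise
  exact ⟨M, fun u hu => hM ⟨u, hu⟩⟩

theorem exists_injective_algHom_clm (A : Type*) [Ring A] [Algebra ℝ A] [FiniteDimensional ℝ A] :
    ∃ n : ℕ, ∃ f : A →ₐ[ℝ] (EuclideanSpace ℂ (Fin n) →L[ℂ] EuclideanSpace ℂ (Fin n)),
      Function.Injective f := by
  let b := Module.finBasis ℝ A
  refine ⟨_, ((Matrix.toEuclideanCLM (𝕜 := ℂ)).toAlgEquiv.toAlgHom.restrictScalars ℝ).comp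
    (Complex.ofRealAm.mapMatrix.comp (Algebra.leftMulMatrix b)), ?_⟩
  exact (Matrix.toEuclideanCLM (𝕜 := ℂ)).injective.comp
    ((Matrix.map_injective Complex.ofReal_injective).comp (Algebra.leftMulMatrix_injective b))

variable {A : Type*} [NormedRing A] [NormedAlgebra ℝ A] [FiniteDimensional ℝ A] {W : Set Aˣ}

theorem exists_norm_le_of_pairwise_commute_of_injective {f : A →ₐ[ℝ] (V →L[ℂ] V)}
    (hf : Function.Injective f) (hcomm : ∀ g ∈ W, ∀ h ∈ W, Commute g h)
    (hW : ∀ g ∈ W, IsPowerBounded (g : A) ∧ IsPowerBounded (g⁻¹ : Aˣ).val) :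
    ∃ M, ∀ g ∈ W, ‖(g : A)‖ ≤ M := by
  let F : Aˣ →* (V →L[ℂ] V)ˣ := Units.map f.toRingHom.toMonoidHom
  obtain ⟨M, hM⟩ : ∃ M, ∀ u ∈ F '' W, ‖u.val‖ ≤ M := by
    refine exists_norm_le_of_pairwise_commute_clm ?_ ?_
    · rintro _ ⟨g, hg, rfl⟩ _ ⟨h, hh, rfl⟩
      exact (hcomm g hg h hh).map F
    · rintro _ ⟨g, hg, rfl⟩
      exact ⟨(hW g hg).1.map f, (hW g hg).2.map f⟩
  obtain ⟨K, -, hK⟩ := f.toLinearMap.exists_antilipschitzWith (LinearMap.ker_eq_bot.2 hf)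
  refine ⟨K * M, fun g hg => (hK.le_mul_norm (map_zero _) _).trans ?_⟩
  gcongr
  exact hM _ ⟨g, hg, rfl⟩

theorem exists_norm_le_of_pairwise_commute (hcomm : ∀ g ∈ W, ∀ h ∈ W, Commute g h)
    (hW : ∀ g ∈ W, IsPowerBounded (g : A) ∧ IsPowerBounded (g⁻¹ : Aˣ).val) :
    ∃ M, ∀ g ∈ W, ‖(g : A)‖ ≤ M := by
  obtain ⟨n, f, hf⟩ := exists_injective_algHom_clm A
  exact exists_norm_le_of_pairwise_commute_of_injective hf hcomm hW

end CommutingPowerBounded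

section Centralizer

variable {A : Type*} [NormedRing A] {G : Subgroup Aˣ} {X : A}

theorem mem_units_centralizer_singleton_iff {g : Aˣ} :
    g ∈ (Submonoid.centralizer {X}).units ↔ Commute (g : A) X := by
  rw [Submonoid.mem_units_iff, Submonoid.mem_centralizer_iff, Submonoid.mem_centralizer_iff]
  simp only [Set.mem_singleton_iff, forall_eq]
  exact ⟨fun h => h.1.symm, fun h => ⟨h.symm, h.units_inv_left.symm⟩⟩

theorem isClosed_inf_units_centralizer (hcl : IsClosed (G : Set Aˣ)) (X : A) :
    IsClosed ((G ⊓ (Submonoid.centralizer {X}).units : Subgroup Aˣ) : Set Aˣ) := by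
  have : ((G ⊓ (Submonoid.centralizer {X}).units : Subgroup Aˣ) : Set Aˣ)
      = (G : Set Aˣ) ∩ {g : Aˣ | (g : A) * X = X * g} :=
    Set.ext fun g => and_congr_right fun _ => mem_units_centralizer_singleton_iff
  rw [this]
  exact hcl.inter (isClosed_eq (Units.continuous_val.mul continuous_const)
    (continuous_const.mul Units.continuous_val))

theorem span_inf_units_centralizer_lt [NormedAlgebra ℝ A] {g : Aˣ} (hg : g ∈ G)
    (hgX : ¬Commute (g : A) X) :
    Submodule.span ℝ (Units.val '' (G ⊓ (Submonoid.centralizer {X}).units : Subgroup Aˣ))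
      < Submodule.span ℝ (Units.val '' (G : Set Aˣ)) := by
  have hle : Submodule.span ℝ (Units.val '' (G ⊓ (Submonoid.centralizer {X}).units : Subgroup Aˣ))
      ≤ Subalgebra.toSubmodule (Subalgebra.centralizer ℝ {X}) := by
    rw [Submodule.span_le]
    rintro _ ⟨h, hh, rfl⟩
    exact hh.2.1
  refine lt_of_le_of_ne (Submodule.span_mono (Set.image_mono inf_le_left)) fun h => hgX ?_
  have hgC : (g : A) ∈ Subalgebra.centralizer ℝ {X} :=
    hle (h.symm ▸ Submodule.subset_span ⟨g, hg, rfl⟩)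
  exact (hgC X rfl).symm

end Centralizer

theorem exists_pos_mul_le_one {C : ℝ} (hC : 0 ≤ C) :
    ∃ ε : ℝ, 0 < ε ∧ 8 * ε * (C + 1) ^ 3 ≤ 1 :=
  ⟨1 / (8 * (C + 1) ^ 3), by positivity, by field_simp; rfl⟩

theorem eventually_norm_expUnit_lt {A B : Type*} [NormedRing A] [NormedAlgebra ℝ A]
    [FiniteDimensional ℝ A] [CompleteSpace A] [NormedRing B] [NormedAlgebra ℝ B] (f : A →ₐ[ℝ] B)
    {η : ℝ} (hη : 0 < η) :
    ∀ᶠ Y in 𝓝 (0 : A), ‖(expUnit Y : A)‖ < ‖(1 : A)‖ + 1 ∧ ‖f (expUnit (-Y)) - 1‖ < η := by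
  have hcont : Continuous fun Y : A => (expUnit Y : A) :=
    Units.continuous_val.comp continuous_expUnit
  have hf : Continuous f := f.toLinearMap.continuous_of_finiteDimensional
  refine (hcont.norm.tendsto 0 |>.eventually_lt_const ?_).and
    (((hf.comp (hcont.comp continuous_neg)).sub continuous_const).norm.tendsto 0
      |>.eventually_lt_const ?_)
  · simp [expUnit_zero]
  · simpa [expUnit_zero] using hη

namespace IsBoundedDegeneration

attribute [local instance] LieRing.ofAssociativeRing

variable {A B : Type*} [NormedRing A] [NormedAlgebra ℝ A] [FiniteDimensional ℝ A] [CompleteSpace A]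
  [NormedRing B] [NormedAlgebra ℝ B] {G : Subgroup Aˣ} {L : A →ₐ[ℝ] B} {C ε : ℝ}
  {hcl : IsClosed (G : Set Aˣ)} {X : A}

theorem eq_zero_of_map_eq_zero (hL : IsBoundedDegeneration G L C)
    (hG : ∀ g ∈ G, IsPowerBounded (g : A)) (hX : X ∈ lieAlgebraOf G hcl) (h₀ : L X = 0) :
    X = 0 := by
  let _ := NormedAlgebra.restrictScalars ℚ ℝ A
  let _ := NormedAlgebra.restrictScalars ℚ ℝ B
  refine eq_of_forall_expUnit_smul_eq fun t => ?_
  rw [smul_zero, expUnit_zero]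
  refine hL.eq_one_of_map_eq_one (hG _ (hX t)) ?_
  rw [coe_expUnit, map_exp L L.toLinearMap.continuous_of_finiteDimensional, map_smul, h₀,
    smul_zero, exp_zero]

theorem exists_norm_le_mul_norm_map (hL : IsBoundedDegeneration G L C)
    (hG : ∀ g ∈ G, IsPowerBounded (g : A)) :
    ∃ K : ℝ, 0 ≤ K ∧ ∀ X ∈ lieAlgebraOf G hcl, ‖X‖ ≤ K * ‖L X‖ := by
  let ℓ : lieAlgebraOf G hcl →ₗ[ℝ] B := L.toLinearMap ∘ₗ (lieAlgebraOf G hcl).toSubmodule.subtype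
  have hker : LinearMap.ker ℓ = ⊥ := LinearMap.ker_eq_bot'.2 fun X h =>
    Subtype.ext (hL.eq_zero_of_map_eq_zero hG X.2 h)
  obtain ⟨K, -, hK⟩ := ℓ.exists_antilipschitzWith hker
  exact ⟨K, K.2, fun X hX => hK.le_mul_norm (map_zero _) ⟨X, hX⟩⟩

theorem tendsto_units_conj (hL : IsBoundedDegeneration G L C)
    (hG : ∀ g ∈ G, IsPowerBounded (g : A)) (hX : X ∈ lieAlgebraOf G hcl) :
    Tendsto (fun g : Aˣ => (g : A) * X * (g⁻¹ : Aˣ))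
      (comap (fun g : Aˣ => L g) (𝓝 1) ⊓ 𝓟 (G : Set Aˣ)) (𝓝[(lieAlgebraOf G hcl : Set A)] X) := by
  obtain ⟨K, hK₀, hK⟩ := hL.exists_norm_le_mul_norm_map (hcl := hcl) hG
  have hG_mem : ∀ᶠ g in comap (fun g : Aˣ => L g) (𝓝 1) ⊓ 𝓟 (G : Set Aˣ), g ∈ G :=
    mem_inf_of_right (mem_principal_self _)
  refine tendsto_nhdsWithin_iff.2 ⟨tendsto_iff_norm_sub_tendsto_zero.2 ?_,
    hG_mem.mono fun g hg => conj_mem_lieAlgebraOf hX hg⟩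
  refine squeeze_zero' (g := fun g : Aˣ => K * (2 * ‖L g - 1‖ * ‖L X‖ * C))
    (.of_forall fun _ => norm_nonneg _) (hG_mem.mono fun g hg => ?_) ?_
  · calc _ ≤ K * ‖L ((g : A) * X * (g⁻¹ : Aˣ)) - L X‖ :=
          map_sub L _ X ▸ hK _ (sub_mem (conj_mem_lieAlgebraOf hX hg) hX)
      _ ≤ K * (2 * ‖L g - 1‖ * ‖L X‖ * ‖L (g⁻¹ : Aˣ)‖) := by
          gcongr
          simpa using norm_map_units_conj_sub_le (L : A →* B) g X 0
      _ ≤ K * (2 * ‖L g - 1‖ * ‖L X‖ * C) := by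
          gcongr
          exact hL.bound _ (G.inv_mem hg)
  · have hlim : Tendsto (fun g : Aˣ => L g)
        (comap (fun g : Aˣ => L g) (𝓝 1) ⊓ 𝓟 (G : Set Aˣ)) (𝓝 1) :=
      tendsto_comap.mono_left inf_le_left
    have := ((((hlim.sub_const 1).norm.const_mul 2).mul_const ‖L X‖).mul_const C).const_mul K
    simpa using this

theorem commute_of_commute_units_conj [NormOneClass B] (hL : IsBoundedDegeneration G L C)
    (hG : ∀ g ∈ G, IsPowerBounded (g : A)) (hε₀ : 0 < ε) (hε : 8 * ε * (C + 1) ^ 3 ≤ 1)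
    (hX : X ∈ lieAlgebraOf G hcl) {g : Aˣ} (hg : g ∈ G) (hgε : ‖L g - 1‖ ≤ ε)
    (hcomm : Commute X ((g : A) * X * (g⁻¹ : Aˣ))) : Commute (g : A) X := by
  let _ := NormedAlgebra.restrictScalars ℚ ℝ A
  refine commute_of_forall_commute_expUnit fun t =>
    hL.commute_of_commute_conj hG hε₀ hε hg (hX t) hgε ?_
  rw [← expUnit_units_conj, mul_smul_comm, smul_mul_assoc]
  exact commute_expUnit_right ((hcomm.smul_left t).smul_right t).exp_left

variable [FiniteDimensional ℝ B] [NormOneClass B]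

-- After conjugation by a small exponential, `g * X * g⁻¹` commutes with `X`; the element of `G`
-- obtained from `g` in this way then commutes with `X` itself.
theorem exists_norm_le_of_inf_units_centralizer (hL : IsBoundedDegeneration G L C)
    (hG : ∀ g ∈ G, IsPowerBounded (g : A)) (hX : X ∈ lieAlgebraOf G hcl) {M : ℝ}
    (hM : ∀ g ∈ G ⊓ (Submonoid.centralizer {X}).units, ‖(g : A)‖ ≤ M) :
    ∃ M', ∀ g ∈ G, ‖(g : A)‖ ≤ M' := by
  have hC := hL.one_le
  obtain ⟨ε, hε₀, hε⟩ := exists_pos_mul_le_one (zero_le_one.trans hL.one_le)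
  have hsmall := eventually_norm_expUnit_lt L (η := ε / (2 * C)) (by positivity)
  have hslice := (hL.tendsto_units_conj hG hX).eventually
    (eventually_commute_expUnit_conj hG hX hsmall)
  have hnear : ∀ᶠ g : Aˣ in comap (fun g : Aˣ => L g) (𝓝 1), ‖L g - 1‖ < ε / 2 :=
    tendsto_comap.eventually (eventually_norm_sub_lt (1 : B) (half_pos hε₀))
  refine hL.exists_norm_le_of_eventually (M := (‖(1 : A)‖ + 1) * M) ?_
  filter_upwards [eventually_inf_principal.1 hslice, hnear] with g hg hgε hgG
  obtain ⟨Y, hY, ⟨hYn, hYL⟩, hcomm⟩ := hg hgG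
  have hYG : expUnit (-Y) ∈ G := expUnit_mem_of_mem_lieAlgebraOf (neg_mem hY)
  set k : Aˣ := expUnit (-Y) * g with hk
  have hkG : k ∈ G := G.mul_mem hYG hgG
  have hkε : ‖L k - 1‖ ≤ ε :=
    calc _ ≤ ‖L (expUnit (-Y)) - 1‖ * ‖L g‖ + ‖L g - 1‖ :=
          norm_map_mul_sub_one_le (L : A →* B) (expUnit (-Y) : A) g
      _ ≤ ε / (2 * C) * C + ε / 2 := by
          gcongr
          exact hL.bound g hgG
      _ = ε := by field_simp; norm_num
  have hkX : Commute (k : A) X := by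
    refine hL.commute_of_commute_units_conj hG hε₀ hε hX hkG hkε ?_
    have : (k : A) * X * (k⁻¹ : Aˣ)
        = expUnit (-Y) * ((g : A) * X * (g⁻¹ : Aˣ)) * expUnit Y := by
      rw [hk, mul_inv_rev, ← expUnit_neg, neg_neg]
      simp only [Units.val_mul, mul_assoc]
    rwa [this]
  calc ‖(g : A)‖ = ‖(expUnit Y : A) * k‖ := by
        rw [hk, expUnit_neg, ← Units.val_mul, mul_inv_cancel_left]
    _ ≤ (‖(1 : A)‖ + 1) * M := by
        refine (norm_mul_le _ _).trans ?_
        gcongr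
        exact hM k ⟨hkG, mem_units_centralizer_singleton_iff.2 hkX⟩

theorem exists_norm_le_of_commute_lieAlgebraOf (hL : IsBoundedDegeneration G L C)
    (hG : ∀ g ∈ G, IsPowerBounded (g : A))
    (hcomm : ∀ X ∈ lieAlgebraOf G hcl, ∀ g ∈ G, Commute (g : A) X) :
    ∃ M, ∀ g ∈ G, ‖(g : A)‖ ≤ M := by
  obtain ⟨ε, hε₀, hε⟩ := exists_pos_mul_le_one (zero_le_one.trans hL.one_le)
  obtain ⟨M, hM⟩ := exists_norm_le_of_pairwise_commute (W := {g | g ∈ G ∧ ‖L g - 1‖ ≤ ε})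
    (fun g hg h hh => hL.commute_of_norm_map_sub_one_le hG hε₀ hε
      (eventually_mem_centralizer hcomm) hg.1 hh.1 hg.2 hh.2)
    (fun g hg => ⟨hG g hg.1, hG _ (G.inv_mem hg.1)⟩)
  refine hL.exists_norm_le_of_eventually (M := M) ?_
  filter_upwards [tendsto_comap.eventually (eventually_norm_sub_lt (1 : B) hε₀)] with g hgε hg
  exact hM g ⟨hg, hgε.le⟩

theorem exists_norm_le (hL : IsBoundedDegeneration G L C) (hcl : IsClosed (G : Set Aˣ))
    (hG : ∀ g ∈ G, IsPowerBounded (g : A)) : ∃ M, ∀ g ∈ G, ‖(g : A)‖ ≤ M := by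
  induction hs : Submodule.span ℝ (Units.val '' (G : Set Aˣ)) using WellFoundedLT.induction
    generalizing G with
  | ind s ih =>
    by_cases hcomm : ∀ X ∈ lieAlgebraOf G hcl, ∀ g ∈ G, Commute (g : A) X
    · exact hL.exists_norm_le_of_commute_lieAlgebraOf hG hcomm
    · push Not at hcomm
      obtain ⟨X, hX, g, hg, hgX⟩ := hcomm
      obtain ⟨M, hM⟩ := ih _ (hs ▸ span_inf_units_centralizer_lt hg hgX) (hL.mono inf_le_left)
        (isClosed_inf_units_centralizer hcl X) (fun g hg => hG g hg.1) rfl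
      exact hL.exists_norm_le_of_inf_units_centralizer hG hX hM

end IsBoundedDegeneration

section TraceForm

open Polynomial

variable {K V : Type*} [Field K] [AddCommGroup V] [Module K V] [FiniteDimensional K V]

-- The idempotent is the projection onto the generalized eigenspace of `f` for the eigenvalue `1`.
theorem exists_isIdempotentElem_aeval_mul_self (f : Module.End K V) {v : V} (hv : f v = v) :
    ∃ q : K[X], IsIdempotentElem (aeval f q * f) ∧ (aeval f q * f) v = v := by
  rcases eq_or_ne v 0 with rfl | hv₀
  · exact ⟨0, by simp [IsIdempotentElem]⟩
  have heval (q : K[X]) : aeval f q v = q.eval 1 • v :=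
    Module.End.aeval_apply_of_hasEigenvector
      ⟨Module.End.mem_eigenspace_iff.2 (by rwa [one_smul]), hv₀⟩
  obtain ⟨s, hs, hsX⟩ := exists_eq_pow_rootMultiplicity_mul_and_not_dvd (minpoly K f)
    (minpoly.ne_zero (Algebra.IsIntegral.isIntegral f)) 1
  set k := rootMultiplicity 1 (minpoly K f)
  have hdvd : ¬ X - C 1 ∣ s * X := fun h =>
    ((prime_X_sub_C (1 : K)).dvd_or_dvd h).elim hsX fun h => one_ne_zero (α := K) <| by
      rwa [dvd_iff_isRoot, IsRoot, eval_X] at h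
  obtain ⟨a, b, hab⟩ : IsCoprime ((X - C 1) ^ k) (s * X) :=
    ((irreducible_X_sub_C (1 : K)).coprime_iff_not_dvd.2 hdvd).pow_left
  have hroot : (minpoly K f).eval 1 = 0 := by
    have := heval (minpoly K f)
    rw [minpoly.aeval, LinearMap.zero_apply] at this
    exact (smul_eq_zero.1 this.symm).resolve_right hv₀
  refine ⟨b * s, ?_, ?_⟩
  · have : (b * s * X) * (b * s * X) = b * s * X - a * b * X * minpoly K f := by
      rw [hs]; linear_combination (b * s * X) * hab
    have hmul : aeval f (b * s) * f = aeval f (b * s * X) := by rw [map_mul _ (b * s), aeval_X]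
    rw [hmul, IsIdempotentElem, ← map_mul, this, map_sub, map_mul _ _ (minpoly K f),
      minpoly.aeval, mul_zero, sub_zero]
  · have h₁ : (b * s).eval 1 = 1 := by
      have hk : ((X - C 1) ^ k : K[X]).eval 1 = 0 := by
        rw [hs, eval_mul] at hroot
        exact (mul_eq_zero.1 hroot).resolve_right fun h => hsX (dvd_iff_isRoot.2 h)
      have := congrArg (eval 1) hab
      rwa [eval_add, eval_mul, hk, mul_zero, zero_add, ← mul_assoc, eval_mul_X, mul_one,
        eval_one] at this
    rw [Module.End.mul_apply, hv, heval, h₁, one_smul]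

variable [CharZero K] {A : Type*} [Ring A] [Algebra K A] [Module A V] [IsScalarTower K A V]

theorem smul_eq_zero_of_forall_trace_lsmul_mul_eq_zero [IsSimpleModule A V] {a : A}
    (ha : ∀ x : A, LinearMap.trace K V (Algebra.lsmul K K V (x * a)) = 0) (v : V) : a • v = 0 := by
  by_contra hne
  obtain ⟨y, hy⟩ := (IsSimpleModule.toSpanSingleton_surjective A hne) v
  have hfix : Algebra.lsmul K K V (y * a) v = v := by simpa [mul_smul] using hy
  obtain ⟨q, hidem, hqv⟩ := exists_isIdempotentElem_aeval_mul_self _ hfix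
  have hq : aeval (Algebra.lsmul K K V (y * a)) q * Algebra.lsmul K K V (y * a)
      = Algebra.lsmul K K V (aeval (y * a) q * y * a) := by
    rw [mul_assoc, map_mul _ _ (y * a), ← aeval_algHom_apply (Algebra.lsmul K K V)]
  have hzero := (LinearMap.IsIdempotentElem.trace_eq_zero_iff hidem).1 (hq ▸ ha _)
  have hv : v = 0 := by rw [← hqv, hzero, LinearMap.zero_apply]
  exact hne (by rw [hv, smul_zero])

theorem exists_forall_eq_trace_lsmul_mul [IsSimpleModule A V] [FiniteDimensional K A]
    (φ : Module.Dual K (Module.End K V)) :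
    ∃ x : A, ∀ a : A, φ (Algebra.lsmul K K V a)
      = LinearMap.trace K V (Algebra.lsmul K K V (x * a)) := by
  let τ : A →ₗ[K] Module.Dual K A :=
    ((LinearMap.mul K A).compr₂ (LinearMap.trace K V ∘ₗ (Algebra.lsmul K K V).toLinearMap)).flip
  have hφ : φ ∘ₗ (Algebra.lsmul K K V).toLinearMap ∈ (LinearMap.ker τ).dualAnnihilator := by
    rw [Submodule.mem_dualAnnihilator]
    intro a ha
    have : Algebra.lsmul K K V a = 0 := LinearMap.ext
      (smul_eq_zero_of_forall_trace_lsmul_mul_eq_zero fun x => LinearMap.congr_fun ha x)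
    simp [this]
  rw [← LinearMap.range_dualMap_eq_dualAnnihilator_ker] at hφ
  obtain ⟨Φ, hΦ⟩ := hφ
  obtain ⟨x, rfl⟩ := (Module.evalEquiv K A).surjective Φ
  exact ⟨x, fun a => (LinearMap.congr_fun hΦ a).symm⟩

end TraceForm

section TraceBound

open scoped Matrix.Norms.Operator

theorem IsPowerBounded.norm_trace_le {ι : Type*} [Fintype ι] [DecidableEq ι] {M : Matrix ι ι ℂ}
    (hM : IsPowerBounded M) : ‖M.trace‖ ≤ Fintype.card ι := by
  have := FiniteDimensional.complete ℂ (Matrix ι ι ℂ)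
  rw [Matrix.trace_eq_sum_roots_charpoly]
  calc _ ≤ (M.charpoly.roots.map (‖·‖)).sum := norm_multiset_sum_le _
    _ ≤ (M.charpoly.roots.map (‖·‖)).card • (1 : ℝ) := by
        refine Multiset.sum_le_card_nsmul _ _ fun r hr => ?_
        obtain ⟨μ, hμ, rfl⟩ := Multiset.mem_map.1 hr
        exact hM.norm_le_one_of_mem_spectrum
          (Matrix.mem_spectrum_iff_isRoot_charpoly.2 (Polynomial.isRoot_of_mem_roots hμ))
    _ ≤ Fintype.card ι := by
        rw [Multiset.card_map, nsmul_one, Nat.cast_le, ← M.charpoly_natDegree_eq_dim]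
        exact Polynomial.card_roots' _

variable {A V : Type*} [NormedRing A] [NormedAlgebra ℝ A] [FiniteDimensional ℝ A] [AddCommGroup V]
  [Module ℝ V] [FiniteDimensional ℝ V] [Module A V] [IsScalarTower ℝ A V]

theorem IsPowerBounded.abs_trace_lsmul_le {a : A} (ha : IsPowerBounded a) :
    |LinearMap.trace ℝ V (Algebra.lsmul ℝ ℝ V a)| ≤ Module.finrank ℝ V := by
  let b := Module.finBasis ℝ V
  let f : A →ₐ[ℝ] Matrix (Fin (Module.finrank ℝ V)) (Fin (Module.finrank ℝ V)) ℂ :=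
    Complex.ofRealAm.mapMatrix.comp
      ((LinearMap.toMatrixAlgEquiv b).toAlgHom.comp (Algebra.lsmul ℝ ℝ V))
  have htrace : ((LinearMap.trace ℝ V (Algebra.lsmul ℝ ℝ V a) : ℝ) : ℂ) = (f a).trace := by
    rw [LinearMap.trace_eq_matrix_trace ℝ b]
    exact (AddMonoidHom.map_trace Complex.ofRealHom _)
  simpa [← htrace] using (ha.map f).norm_trace_le

theorem exists_abs_apply_lsmul_le_of_isSimpleModule [IsSimpleModule A V] {G : Submonoid A}
    (hadj : Algebra.adjoin ℝ (G : Set A) = ⊤) (hG : ∀ g ∈ G, IsPowerBounded g)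
    (φ : Module.Dual ℝ (Module.End ℝ V)) :
    ∃ M, ∀ g ∈ G, |φ (Algebra.lsmul ℝ ℝ V g)| ≤ M := by
  obtain ⟨x, hx⟩ := exists_forall_eq_trace_lsmul_mul (A := A) φ
  simp only [hx]
  have hxG : x ∈ Submodule.span ℝ (G : Set A) := by
    rw [← G.closure_eq, ← Algebra.adjoin_eq_span, hadj]
    exact Submodule.mem_top
  clear hx
  induction hxG using Submodule.span_induction with
  | mem h hh => exact ⟨_, fun g hg => (hG _ (G.mul_mem hh hg)).abs_trace_lsmul_le⟩
  | zero => exact ⟨0, by simp⟩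
  | add x y _ _ hx hy =>
    obtain ⟨M, hM⟩ := hx
    obtain ⟨N, hN⟩ := hy
    refine ⟨M + N, fun g hg => ?_⟩
    rw [add_mul, map_add, map_add]
    exact (abs_add_le _ _).trans (add_le_add (hM g hg) (hN g hg))
  | smul c x _ hx =>
    obtain ⟨M, hM⟩ := hx
    refine ⟨|c| * M, fun g hg => ?_⟩
    rw [smul_mul_assoc, map_smul, map_smul, smul_eq_mul, abs_mul]
    gcongr
    exact hM g hg

end TraceBound

section BlockRescale

variable {R A ι : Type*} [CommRing R] [Ring A] [Algebra R A] [Fintype ι] [DecidableEq ι]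

/-- The rescaling of a block triangular representation `ρ`, for the blocks given by the weights
`w`, whose entries at distance `d` above the diagonal blocks are multiplied by `t ^ d`. For
`t ≠ 0` it is a conjugate of `ρ`; for `t = 0` it is the block diagonal part of `ρ`. -/
def blockRescale (ρ : A →ₐ[R] Matrix ι ι R) {w : ι → ℕ} (hρ : ∀ a, (ρ a).BlockTriangular w)
    (t : R) : A →ₐ[R] Matrix ι ι R :=
  .ofLinearMap
    { toFun := fun a => .of fun i j => t ^ (w j - w i) * ρ a i j
      map_add' := fun a b => by ext; simp [mul_add]
      map_smul' := fun c a => by ext; simp [mul_left_comm] }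
    (by
      ext i j
      rcases eq_or_ne i j with rfl | h
      · simp
      · simp [Matrix.one_apply_ne h])
    (fun a b => by
      ext i j
      simp only [map_mul, LinearMap.coe_mk, AddHom.coe_mk, Matrix.of_apply, Matrix.mul_apply,
        Finset.mul_sum]
      refine Finset.sum_congr rfl fun k _ => ?_
      rcases lt_or_ge (w k) (w i) with hi | hi
      · simp [hρ a hi]
      rcases lt_or_ge (w j) (w k) with hj | hj
      · simp [hρ b hj]
      rw [← Nat.sub_add_sub_cancel hj hi, pow_add]
      ring)

variable {ρ : A →ₐ[R] Matrix ι ι R} {w : ι → ℕ} (hρ : ∀ a, (ρ a).BlockTriangular w)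

theorem blockRescale_apply (t : R) (a : A) (i j : ι) :
    blockRescale ρ hρ t a i j = t ^ (w j - w i) * ρ a i j := rfl

theorem blockRescale_injective [IsDomain R] (hinj : Function.Injective ρ) {t : R} (ht : t ≠ 0) :
    Function.Injective (blockRescale ρ hρ t) := fun a b hab => hinj <| by
  ext i j
  have := congrFun₂ hab i j
  simpa only [blockRescale_apply, mul_right_inj' (pow_ne_zero _ ht)] using this

theorem blockRescale_zero_apply (a : A) (i j : ι) :
    blockRescale ρ hρ 0 a i j = if w i = w j then ρ a i j else 0 := by
  rw [blockRescale_apply]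
  rcases lt_trichotomy (w i) (w j) with h | h | h
  · rw [zero_pow (Nat.sub_ne_zero_of_lt h), zero_mul, if_neg h.ne]
  · rw [h, Nat.sub_self, pow_zero, one_mul, if_pos rfl]
  · rw [hρ a h, mul_zero, ite_self]

end BlockRescale

section ModuleMatrix

open Module LinearMap

variable {R A V : Type*} [CommRing R] [Ring A] [Algebra R A] [AddCommGroup V] [Module R V]
  [Module A V] [IsScalarTower R A V]

/-- The action of `A` on the module `V`, in terms of matrices with respect to a basis `b`. -/
noncomputable def lsmulMatrix {ι : Type*} [Fintype ι] [DecidableEq ι] (b : Basis ι R V) :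
    A →ₐ[R] Matrix ι ι R :=
  (toMatrixAlgEquiv b).toAlgHom.comp (Algebra.lsmul R R V)

theorem lsmulMatrix_apply {ι : Type*} [Fintype ι] [DecidableEq ι] (b : Basis ι R V) (a : A)
    (i j : ι) : lsmulMatrix b a i j = b.repr (a • b j) i :=
  toMatrixAlgEquiv_apply _ _ _ _

theorem lsmulMatrix_injective [FaithfulSMul A V] {ι : Type*} [Fintype ι] [DecidableEq ι]
    (b : Basis ι R V) : Function.Injective (lsmulMatrix (A := A) b) :=
  (toMatrixAlgEquiv b).injective.comp fun _ _ h =>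
    FaithfulSMul.eq_of_smul_eq_smul fun v => LinearMap.congr_fun h v

theorem exists_basis_sum_quotient {W : Submodule A V} {ι₁ ι₂ : Type*} (b₁ : Basis ι₁ R W)
    (b₂ : Basis ι₂ R (V ⧸ W)) : ∃ b : Basis (ι₁ ⊕ ι₂) R V,
      (∀ j, b (.inl j) = b₁ j) ∧ (∀ j, W.mkQ (b (.inr j)) = b₂ j) ∧
      (∀ (v : W) i, b.repr v (.inl i) = b₁.repr v i) ∧
      ∀ v i, b.repr v (.inr i) = b₂.repr (W.mkQ v) i := by
  let e := Submodule.Quotient.restrictScalarsEquiv R W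
  exact ⟨.sumQuot (W := W.restrictScalars R) b₁ (b₂.map e.symm),
    fun j => Basis.sumQuot_inl (W := W.restrictScalars R) b₁ (b₂.map e.symm) j,
    fun j => (congrArg e (Basis.sumQuot_inr (W := W.restrictScalars R) b₁ (b₂.map e.symm) j)).trans
      (e.apply_symm_apply (b₂ j)),
    fun v i => Basis.sumQuot_repr_inl (W := W.restrictScalars R) b₁ (b₂.map e.symm) v i,
    fun v i => Basis.sumQuot_repr_inr (W := W.restrictScalars R) b₁ (b₂.map e.symm) v i⟩

end ModuleMatrix

section BlockTriangularBasis

open Module LinearMap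

variable {A V : Type*} [Ring A] [Algebra ℝ A] [AddCommGroup V] [Module ℝ V] [Module A V]
  [IsScalarTower ℝ A V]

variable (V) in
/-- The module `V` has a basis in which `A` acts by block triangular matrices (the blocks being
the level sets of a weight `w`) whose diagonal blocks are bounded on `G`. -/
def HasBoundedBlockBasis (G : Set A) : Prop :=
  ∃ (ι : Type) (_ : Fintype ι) (_ : DecidableEq ι) (b : Basis ι ℝ V) (w : ι → ℕ) (C : ℝ),
    (∀ a : A, (lsmulMatrix b a).BlockTriangular w) ∧
      ∀ g ∈ G, ∀ i j, w i = w j → |lsmulMatrix b g i j| ≤ C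

namespace HasBoundedBlockBasis

theorem of_submodule_of_quotient {G : Set A} {W : Submodule A V}
    (hW : HasBoundedBlockBasis W G) (hQ : HasBoundedBlockBasis (V ⧸ W) G) :
    HasBoundedBlockBasis V G := by
  obtain ⟨ι₁, _, _, b₁, w₁, C₁, htri₁, hC₁⟩ := hW
  obtain ⟨ι₂, _, _, b₂, w₂, C₂, htri₂, hC₂⟩ := hQ
  obtain ⟨b, hb₁, hb₂, repr_inl, repr_inr⟩ := exists_basis_sum_quotient b₁ b₂
  have hll (a : A) (i j : ι₁) : lsmulMatrix b a (.inl i) (.inl j) = lsmulMatrix b₁ a i j := by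
    rw [lsmulMatrix_apply, lsmulMatrix_apply, hb₁, ← repr_inl, Submodule.coe_smul]
  have hrl (a : A) (i : ι₂) (j : ι₁) : lsmulMatrix b a (.inr i) (.inl j) = 0 := by
    rw [lsmulMatrix_apply, hb₁, repr_inr, map_smul, Submodule.mkQ_apply,
      (Submodule.Quotient.mk_eq_zero W).2 (b₁ j).2, smul_zero, map_zero, Finsupp.zero_apply]
  have hrr (a : A) (i j : ι₂) : lsmulMatrix b a (.inr i) (.inr j) = lsmulMatrix b₂ a i j := by
    rw [lsmulMatrix_apply, lsmulMatrix_apply, repr_inr, map_smul, hb₂]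
  have hw (i : ι₁) (j : ι₂) : w₁ i < ∑ k, w₁ k + 1 + w₂ j := by
    linarith [Finset.single_le_sum (fun k _ => (w₁ k).zero_le) (Finset.mem_univ i)]
  refine ⟨_, inferInstance, inferInstance, b, Sum.elim w₁ (∑ k, w₁ k + 1 + w₂ ·), max C₁ C₂,
    ?_, ?_⟩
  · rintro a (i | i) (j | j) hij
    · exact (hll a i j).trans (htri₁ a hij)
    · exact absurd hij (hw i j).not_gt
    · exact hrl a i j
    · exact (hrr a i j).trans (htri₂ a (by simpa using hij))
  · rintro g hg (i | i) (j | j) hij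
    · exact hll g i j ▸ (hC₁ g hg i j hij).trans (le_max_left _ _)
    · exact absurd hij (hw i j).ne
    · exact absurd hij (hw j i).ne'
    · exact hrr g i j ▸ (hC₂ g hg i j (by simpa using hij)).trans (le_max_right _ _)

theorem of_isSimpleModule {A : Type*} [NormedRing A] [NormedAlgebra ℝ A] [FiniteDimensional ℝ A]
    [FiniteDimensional ℝ V] [Module A V] [IsScalarTower ℝ A V] [IsSimpleModule A V]
    {G : Submonoid A} (hadj : Algebra.adjoin ℝ (G : Set A) = ⊤)
    (hG : ∀ g ∈ G, IsPowerBounded g) : HasBoundedBlockBasis V (G : Set A) := by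
  let b := finBasis ℝ V
  have hentry (i j) : ∃ M, ∀ g ∈ G, |lsmulMatrix b g i j| ≤ M := by
    simpa only [lsmulMatrix_apply] using!
      exists_abs_apply_lsmul_le_of_isSimpleModule hadj hG (b.coord i ∘ₗ LinearMap.applyₗ (b j))
  choose M hM using hentry
  refine ⟨_, inferInstance, inferInstance, b, 0, ∑ i, ∑ j, |M i j|, fun a i j h => absurd h
    (lt_irrefl _), fun g hg i j _ => ?_⟩
  calc _ ≤ |M i j| := (hM i j g hg).trans (le_abs_self _)
    _ ≤ ∑ j, |M i j| :=
        Finset.single_le_sum (f := (|M i ·|)) (fun _ _ => abs_nonneg _) (Finset.mem_univ j)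
    _ ≤ _ := Finset.single_le_sum (f := fun i => ∑ j, |M i j|) (fun _ _ => by positivity)
        (Finset.mem_univ i)

end HasBoundedBlockBasis

theorem hasBoundedBlockBasis_of_adjoin_eq_top {A : Type*} [NormedRing A] [NormedAlgebra ℝ A]
    [FiniteDimensional ℝ A] (V : Type*) [AddCommGroup V] [Module ℝ V] [FiniteDimensional ℝ V]
    [Module A V] [IsScalarTower ℝ A V] {G : Submonoid A}
    (hadj : Algebra.adjoin ℝ (G : Set A) = ⊤) (hG : ∀ g ∈ G, IsPowerBounded g) :
    HasBoundedBlockBasis V (G : Set A) := by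
  induction hd : finrank ℝ V using Nat.strong_induction_on generalizing V with
  | _ d ih =>
  rcases subsingleton_or_nontrivial V with hV | hV
  · exact ⟨Empty, inferInstance, inferInstance, .empty V, 0, 0, fun _ i => i.elim,
      fun _ _ i => i.elim⟩
  by_cases hsimple : IsSimpleModule A V
  · exact .of_isSimpleModule hadj hG
  obtain ⟨W, hbot, htop⟩ : ∃ W : Submodule A V, W ≠ ⊥ ∧ W ≠ ⊤ := by
    by_contra! h
    exact hsimple ((isSimpleModule_iff A V).2 ⟨fun W => or_iff_not_imp_left.2 (h W)⟩)
  have : FiniteDimensional ℝ W := .finiteDimensional_submodule (W.restrictScalars ℝ)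
  have : FiniteDimensional ℝ (V ⧸ W) := .of_surjective (W.mkQ.restrictScalars ℝ) W.mkQ_surjective
  have : Nontrivial W := Submodule.nontrivial_iff_ne_bot.2 hbot
  have : Nontrivial (V ⧸ W) := Submodule.Quotient.nontrivial_iff.2 htop
  have hadd : finrank ℝ (V ⧸ W) + finrank ℝ W = finrank ℝ V :=
    Submodule.finrank_quotient_add_finrank (W.restrictScalars ℝ)
  have := finrank_pos (R := ℝ) (M := W)
  have := finrank_pos (R := ℝ) (M := V ⧸ W)
  exact .of_submodule_of_quotient (ih _ (by omega) W rfl) (ih _ (by omega) (V ⧸ W) rfl)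

end BlockTriangularBasis

theorem eventually_norm_sub_le_mul_norm {T E F : Type*} [TopologicalSpace T]
    [NormedAddCommGroup E] [NormedSpace ℝ E] [FiniteDimensional ℝ E] [NormedAddCommGroup F]
    [NormedSpace ℝ F] {f : T → E →ₗ[ℝ] F} (hf : ∀ x, Continuous fun t => f t x) (t₀ : T) {δ : ℝ}
    (hδ : 0 < δ) : ∀ᶠ t in 𝓝 t₀, ∀ x, ‖f t x - f t₀ x‖ ≤ δ * ‖x‖ := by
  have hcont : Continuous fun t => (f t).toContinuousLinearMap := continuous_clm_apply.2 hf
  filter_upwards [(hcont.tendsto t₀).eventually (eventually_norm_sub_lt _ hδ)] with t ht x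
  exact ((f t).toContinuousLinearMap - (f t₀).toContinuousLinearMap).le_of_opNorm_le ht.le x

section ClosedGroup

open scoped Matrix.Norms.Operator

theorem linfty_opNorm_le_of_forall_abs_le {ι : Type*} [Fintype ι] {M : Matrix ι ι ℝ} {K : ℝ}
    (hK : 0 ≤ K) (h : ∀ i j, |M i j| ≤ K) : ‖M‖ ≤ Fintype.card ι * K := by
  lift K to NNReal using hK
  rw [Matrix.linfty_opNorm_def, ← nsmul_eq_mul, ← NNReal.coe_nsmul, NNReal.coe_le_coe]
  exact Finset.sup_le fun i _ => Finset.sum_le_card_nsmul _ _ _ fun j _ => h i j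

variable {A : Type*} [NormedRing A] [NormedAlgebra ℝ A] [FiniteDimensional ℝ A]

theorem exists_injective_norm_blockRescale_sub_le {ι : Type*} [Fintype ι] [DecidableEq ι]
    {ρ : A →ₐ[ℝ] Matrix ι ι ℝ} {w : ι → ℕ} (hρ : ∀ a, (ρ a).BlockTriangular w)
    (hinj : Function.Injective ρ) {δ : ℝ} (hδ : 0 < δ) : ∃ t, Function.Injective
      (blockRescale ρ hρ t) ∧ ∀ a, ‖blockRescale ρ hρ t a - blockRescale ρ hρ 0 a‖ ≤ δ * ‖a‖ := by
  have hcont (a : A) : Continuous fun t => blockRescale ρ hρ t a := continuous_matrix fun i j =>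
    (continuous_pow (w j - w i)).mul continuous_const
  obtain ⟨t, ht, ht₀⟩ := (((eventually_norm_sub_le_mul_norm (f := fun t =>
    (blockRescale ρ hρ t).toLinearMap) hcont 0 hδ).filter_mono nhdsWithin_le_nhds).and
    self_mem_nhdsWithin).exists (f := 𝓝[≠] (0 : ℝ))
  exact ⟨t, blockRescale_injective hρ hinj ht₀, ht⟩

theorem HasBoundedBlockBasis.exists_isBoundedDegeneration [Nontrivial A] {G : Subgroup Aˣ}
    (h : HasBoundedBlockBasis A (Units.val '' (G : Set Aˣ))) :
    ∃ (ι : Type) (_ : Fintype ι) (_ : Nonempty ι) (_ : DecidableEq ι) (L : A →ₐ[ℝ] Matrix ι ι ℝ)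
      (C : ℝ), IsBoundedDegeneration G L C := by
  obtain ⟨ι, _, _, b, w, C, htri, hC⟩ := h
  refine ⟨ι, inferInstance, b.index_nonempty, inferInstance, blockRescale (lsmulMatrix b) htri 0,
    Fintype.card ι * |C|, fun g hg => ?_, fun δ hδ => ?_⟩
  · refine linfty_opNorm_le_of_forall_abs_le (abs_nonneg C) fun i j => ?_
    rw [blockRescale_zero_apply]
    split_ifs with hij
    · exact (hC g ⟨g, hg, rfl⟩ i j hij).trans (le_abs_self C)
    · exact abs_zero.trans_le (abs_nonneg C)
  · obtain ⟨t, ht⟩ :=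
      exists_injective_norm_blockRescale_sub_le htri (lsmulMatrix_injective b) hδ
    exact ⟨_, ht⟩

theorem exists_norm_le_of_adjoin_eq_top {G : Subgroup Aˣ} (hcl : IsClosed (G : Set Aˣ))
    (hadj : Algebra.adjoin ℝ (Units.val '' (G : Set Aˣ)) = ⊤)
    (hG : ∀ g ∈ G, IsPowerBounded (g : A)) : ∃ M, ∀ g ∈ G, ‖(g : A)‖ ≤ M := by
  rcases subsingleton_or_nontrivial A with hA | hA
  · exact ⟨0, fun g _ => (norm_of_subsingleton (g : A)).le⟩
  have := FiniteDimensional.complete ℝ A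
  have hblock := hasBoundedBlockBasis_of_adjoin_eq_top A (G := G.toSubmonoid.map (Units.coeHom A))
    hadj (by rintro _ ⟨g, hg, rfl⟩; exact hG g hg)
  obtain ⟨ι, _, _, _, L, C, hL⟩ := hblock.exists_isBoundedDegeneration
  exact hL.exists_norm_le hcl hG

theorem exists_norm_le_of_isClosed {G : Subgroup Aˣ} (hcl : IsClosed (G : Set Aˣ))
    (hG : ∀ g ∈ G, IsPowerBounded (g : A)) : ∃ M, ∀ g ∈ G, ‖(g : A)‖ ≤ M := by
  let 𝒜 := Algebra.adjoin ℝ (Units.val '' (G : Set Aˣ))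
  let f : 𝒜ˣ →* Aˣ := Units.map 𝒜.val
  have mem (g : Aˣ) (hg : g ∈ G) : (g : A) ∈ 𝒜 := Algebra.subset_adjoin ⟨g, hg, rfl⟩
  have lift (g : Aˣ) (hg : g ∈ G) : ∃ u : 𝒜ˣ, f u = g :=
    ⟨⟨⟨g, mem g hg⟩, ⟨(g⁻¹ : Aˣ), mem _ (G.inv_mem hg)⟩, Subtype.ext g.mul_inv,
      Subtype.ext g.inv_mul⟩, Units.ext rfl⟩
  have hpre : Units.val '' (G.comap f : Set 𝒜ˣ) = Subtype.val ⁻¹' (Units.val '' (G : Set Aˣ)) := by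
    ext x
    constructor
    · rintro ⟨u, hu, rfl⟩
      exact ⟨f u, hu, rfl⟩
    · rintro ⟨g, hg, hgx⟩
      obtain ⟨u, rfl⟩ := lift g hg
      exact ⟨u, hg, Subtype.ext hgx⟩
  obtain ⟨M, hM⟩ := exists_norm_le_of_adjoin_eq_top (G := G.comap f)
    (hcl.preimage (Continuous.units_map _ continuous_subtype_val))
    (hpre ▸ Algebra.adjoin_adjoin_coe_preimage)
    fun u hu => (isPowerBounded_map_iff (f := 𝒜.val) Subtype.val_injective).1 (hG _ hu)
  refine ⟨M, fun g hg => ?_⟩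
  obtain ⟨u, rfl⟩ := lift g hg
  exact hM u hg

end ClosedGroup

section Distal

open scoped Matrix.Norms.Operator

variable {m : ℕ} {S : Set (Matrix (Fin m) (Fin m) ℝ)} {B : Matrix (Fin m) (Fin m) ℝ}

/-- A set `S` of matrices acts distally on the unit sphere if no two distinct points `x`, `y` of
the sphere can be brought arbitrarily close to a common point by the normalized action of elements
of `S`. -/
def ActsDistally (S : Set (Matrix (Fin m) (Fin m) ℝ)) : Prop :=
  ∀ x y : EuclideanSpace ℝ (Fin m), ‖x‖ = 1 → ‖y‖ = 1 → x ≠ y →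
    ∀ p ∈ closure {q : EuclideanSpace ℝ (Fin m) × EuclideanSpace ℝ (Fin m) |
      ∃ T ∈ S, q = (nact T x, nact T y)}, p.1 ≠ p.2

theorem ActsDistally.mono {S' : Set (Matrix (Fin m) (Fin m) ℝ)} (hS : ActsDistally S)
    (h : S' ⊆ S) : ActsDistally S' := fun x y hx hy hxy p hp =>
  hS x y hx hy hxy p (closure_mono (by rintro _ ⟨T, hT, rfl⟩; exact ⟨T, h hT, rfl⟩) hp)

theorem nact_smul_left {c : ℝ} (hc : 0 < c) (A : Matrix (Fin m) (Fin m) ℝ)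
    (x : EuclideanSpace ℝ (Fin m)) : nact (c • A) x = nact A x := by
  rw [nact, map_smul]
  exact normalize_smul_of_pos hc (Matrix.toEuclideanLin A x)

theorem nact_smul_right {c : ℝ} (hc : 0 < c) (A : Matrix (Fin m) (Fin m) ℝ)
    (x : EuclideanSpace ℝ (Fin m)) : nact A (c • x) = nact A x := by
  rw [nact, map_smul]
  exact normalize_smul_of_pos hc (Matrix.toEuclideanLin A x)

theorem tendsto_nact {α : Type*} {l : Filter α} {T : α → Matrix (Fin m) (Fin m) ℝ}
    (hT : Tendsto T l (𝓝 B)) {x : EuclideanSpace ℝ (Fin m)} (hx : Matrix.toEuclideanLin B x ≠ 0) :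
    Tendsto (fun k => nact (T k) x) l (𝓝 (nact B x)) := by
  have hcont : Continuous fun A : Matrix (Fin m) (Fin m) ℝ => Matrix.toEuclideanLin A x :=
    ((LinearMap.applyₗ x).comp Matrix.toEuclideanLin.toLinearMap).continuous_of_finiteDimensional
  have h := (hcont.tendsto B).comp hT
  exact (h.norm.inv₀ (norm_ne_zero_iff.2 hx)).smul h

theorem toEuclideanLin_injective_iff :
    Function.Injective (Matrix.toEuclideanLin B) ↔ B.det ≠ 0 := by
  rw [← isUnit_iff_ne_zero, ← Matrix.isUnit_iff_isUnit_det, ← Matrix.mulVec_injective_iff_isUnit]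
  exact ((WithLp.equiv 2 _).symm.comp_injective (B.mulVec ∘ WithLp.ofLp)).trans
    ((WithLp.equiv 2 _).injective_comp B.mulVec)

theorem nact_eq_nact_iff {x y : EuclideanSpace ℝ (Fin m)} (hx : Matrix.toEuclideanLin B x ≠ 0)
    (hy : Matrix.toEuclideanLin B y ≠ 0) :
    nact B x = nact B y ↔ SameRay ℝ (Matrix.toEuclideanLin B x) (Matrix.toEuclideanLin B y) :=
  (sameRay_iff_inv_norm_smul_eq_of_ne hx hy).symm

theorem eq_of_nact_eq_nact (hB : B.det ≠ 0) {x y : EuclideanSpace ℝ (Fin m)} (hx : ‖x‖ = 1)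
    (hy : ‖y‖ = 1) (h : nact B x = nact B y) : x = y := by
  have hinj := toEuclideanLin_injective_iff.2 hB
  have ne {z : EuclideanSpace ℝ (Fin m)} (hz : ‖z‖ = 1) : Matrix.toEuclideanLin B z ≠ 0 :=
    (map_ne_zero_iff _ hinj).2 (norm_ne_zero_iff.1 (hz.trans_ne one_ne_zero))
  rw [nact_eq_nact_iff (ne hx) (ne hy), hinj.sameRay_map_iff] at h
  exact (sameRay_iff_of_norm_eq (hx.trans hy.symm)).1 h

theorem exists_ne_nact_eq_nact (hB : B ≠ 0) (hdet : B.det = 0) :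
    ∃ x y : EuclideanSpace ℝ (Fin m), ‖x‖ = 1 ∧ ‖y‖ = 1 ∧ x ≠ y ∧
      Matrix.toEuclideanLin B x ≠ 0 ∧ Matrix.toEuclideanLin B y ≠ 0 ∧ nact B x = nact B y := by
  obtain ⟨z, hBz, hz⟩ : ∃ z, Matrix.toEuclideanLin B z = 0 ∧ z ≠ 0 := by
    have := mt toEuclideanLin_injective_iff.1 (not_not.2 hdet)
    simpa [injective_iff_map_eq_zero] using this
  obtain ⟨w, hBw⟩ : ∃ w, Matrix.toEuclideanLin B w ≠ 0 := by
    by_contra! h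
    exact hB (Matrix.toEuclideanLin.map_eq_zero_iff.1 (LinearMap.ext h))
  have hBwz : Matrix.toEuclideanLin B (w + z) = Matrix.toEuclideanLin B w := by
    rw [map_add, hBz, add_zero]
  have ne_zero {v} (hv : Matrix.toEuclideanLin B v ≠ 0) : v ≠ 0 := fun h => hv (by rw [h, map_zero])
  have hw := ne_zero hBw
  have hwz := ne_zero (hBwz.trans_ne hBw)
  have inv_pos {v : EuclideanSpace ℝ (Fin m)} (hv : v ≠ 0) : 0 < ‖v‖⁻¹ :=
    inv_pos.2 (norm_pos_iff.2 hv)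
  refine ⟨‖w‖⁻¹ • w, ‖w + z‖⁻¹ • (w + z), norm_normalize_eq_one_iff.2 hw,
    norm_normalize_eq_one_iff.2 hwz, fun h => ?_, ?_, ?_, ?_⟩
  · obtain ⟨r, -, hr⟩ := ((sameRay_iff_inv_norm_smul_eq_of_ne hw hwz).2 h).exists_pos_left hw hwz
    have hr₁ : r • Matrix.toEuclideanLin B w = (1 : ℝ) • Matrix.toEuclideanLin B w := by
      rw [← map_smul, hr, hBwz, one_smul]
    rw [smul_left_injective ℝ hBw hr₁, one_smul] at hr
    exact hz (left_eq_add.1 hr)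
  · rw [map_smul]
    exact smul_ne_zero (inv_pos hw).ne' hBw
  · rw [map_smul, hBwz]
    exact smul_ne_zero (inv_pos hwz).ne' hBw
  · rw [nact_smul_right (inv_pos hw), nact_smul_right (inv_pos hwz), nact, nact, hBwz]

theorem ActsDistally.det_ne_zero_of_tendsto_smul (hS : ActsDistally S) {α : Type*} {l : Filter α}
    [l.NeBot] {T : α → Matrix (Fin m) (Fin m) ℝ} (hT : ∀ k, T k ∈ S) {c : α → ℝ}
    (hc : ∀ k, 0 < c k) (hlim : Tendsto (fun k => c k • T k) l (𝓝 B)) (hB : B ≠ 0) :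
    B.det ≠ 0 := by
  intro hdet
  obtain ⟨x, y, hx, hy, hxy, hBx, hBy, hnact⟩ := exists_ne_nact_eq_nact hB hdet
  refine hS x y hx hy hxy (nact B x, nact B y) (mem_closure_of_tendsto
    ((tendsto_nact hlim hBx).prodMk_nhds (tendsto_nact hlim hBy))
    (Eventually.of_forall fun k => ⟨T k, hT k, ?_⟩)) hnact
  rw [nact_smul_left (hc k), nact_smul_left (hc k)]

theorem actsDistally_of_isBounded (hdet : ∀ A ∈ S, A.det = 1) (hS : Bornology.IsBounded S) :
    ActsDistally S := by
  intro x y hx hy hxy p hp heq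
  obtain ⟨q, hq, hlim⟩ := mem_closure_iff_seq_limit.1 hp
  choose T hTS hT using hq
  obtain ⟨B, hBS, ψ, hψ, hB⟩ := tendsto_subseq_of_bounded hS hTS
  have hdetB : B.det ≠ 0 := by
    have hclosed : IsClosed {A : Matrix (Fin m) (Fin m) ℝ | A.det = 1} :=
      isClosed_eq (by fun_prop) continuous_const
    exact (closure_minimal hdet hclosed hBS).trans_ne one_ne_zero
  have tendsto_orbit {z : EuclideanSpace ℝ (Fin m)} (hz : ‖z‖ = 1) :
      Tendsto (fun k => nact (T (ψ k)) z) atTop (𝓝 (nact B z)) :=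
    tendsto_nact hB ((map_ne_zero_iff _ (toEuclideanLin_injective_iff.2 hdetB)).2
      (norm_ne_zero_iff.1 (hz.trans_ne one_ne_zero)))
  have hp_eq : p = (nact B x, nact B y) := by
    refine tendsto_nhds_unique (hlim.comp hψ.tendsto_atTop) ?_
    simpa only [Function.comp_def, hT] using
      (tendsto_orbit hx).prodMk_nhds (tendsto_orbit hy)
  rw [hp_eq] at heq
  exact hxy (eq_of_nact_eq_nact hdetB hx hy heq)

theorem ActsDistally.isBounded (hdet : ∀ A ∈ S, A.det = 1) (hS : ActsDistally S) :
    Bornology.IsBounded S := by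
  rcases Nat.eq_zero_or_pos m with rfl | hm
  · exact (Set.toFinite S).isBounded
  rw [isBounded_iff_forall_norm_le]
  by_contra! hunb
  choose T hTS hT using fun k : ℕ => hunb k
  have hpos (k : ℕ) : 0 < ‖T k‖ := (Nat.cast_nonneg k).trans_lt (hT k)
  have hu (k : ℕ) : ‖T k‖⁻¹ • T k ∈ Metric.sphere (0 : Matrix (Fin m) (Fin m) ℝ) 1 :=
    mem_sphere_zero_iff_norm.2 (norm_normalize_eq_one_iff.2 (norm_pos_iff.1 (hpos k)))
  obtain ⟨B, hB, ψ, hψ, hlim⟩ := (isCompact_sphere _ _).tendsto_subseq hu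
  have hinv : Tendsto (fun k => ‖T (ψ k)‖⁻¹) atTop (𝓝 0) :=
    (tendsto_inv_atTop_zero.comp (tendsto_atTop_mono (fun k => (hT k).le)
      tendsto_natCast_atTop_atTop)).comp hψ.tendsto_atTop
  refine hS.det_ne_zero_of_tendsto_smul (fun k => hTS (ψ k)) (fun k => inv_pos.2 (hpos (ψ k))) hlim
    (ne_zero_of_mem_unit_sphere ⟨B, hB⟩) ?_
  have hdet_lim := (continuous_id.matrix_det.tendsto B).comp hlim
  refine tendsto_nhds_unique hdet_lim ?_
  simpa [Function.comp_def, hdet _ (hTS _), hm.ne'] using hinv.pow m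

theorem actsDistally_iff_isBounded (hdet : ∀ A ∈ S, A.det = 1) :
    ActsDistally S ↔ Bornology.IsBounded S :=
  ⟨fun h => h.isBounded hdet, actsDistally_of_isBounded hdet⟩

end Distal

section ClosedSemigroup

open scoped Matrix.Norms.Operator

variable {m : ℕ} {S : Set (Matrix (Fin m) (Fin m) ℝ)} {T : Matrix (Fin m) (Fin m) ℝ}

theorem pow_succ_mem {M : Type*} [Monoid M] {S : Set M} (hmul : ∀ a ∈ S, ∀ b ∈ S, a * b ∈ S)
    {a : M} (ha : a ∈ S) (k : ℕ) : a ^ (k + 1) ∈ S := by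
  induction k with
  | zero => rwa [zero_add, pow_one]
  | succ k ih => exact pow_succ a (k + 1) ▸ hmul _ ih _ ha

-- The closure is a compact semigroup, so it contains an idempotent, and `1` is the only idempotent
-- of determinant one.
theorem one_mem_closure_range_pow_succ (hdet : T.det = 1) (hT : IsPowerBounded T) :
    1 ∈ closure (Set.range fun k : ℕ => T ^ (k + 1)) := by
  set K := closure (Set.range fun k : ℕ => T ^ (k + 1))
  have hbdd : Bornology.IsBounded (Set.range fun k : ℕ => T ^ (k + 1)) :=
    hT.subset (Set.range_subset_iff.2 fun k => ⟨k + 1, rfl⟩)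
  have hmul : ∀ A ∈ K, ∀ B ∈ K, A * B ∈ K := fun A hA B hB =>
    map_mem_closure₂ continuous_mul hA hB fun _ ⟨i, hi⟩ _ ⟨j, hj⟩ =>
      ⟨i + 1 + j, by simp only [← hi, ← hj, ← pow_add, add_assoc]⟩
  obtain ⟨E, hE, hidem⟩ := exists_idempotent_in_compact_subsemigroup
    (fun _ => continuous_mul_const _) K (Set.range_nonempty _).closure hbdd.isCompact_closure hmul
  have hdetE : E.det = 1 := closure_minimal
    (Set.range_subset_iff.2 fun k => by rw [Set.mem_ofPred, Matrix.det_pow, hdet, one_pow])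
    (isClosed_eq (f := Matrix.det) (by fun_prop) continuous_const) hE
  have hunit : IsUnit E := E.isUnit_iff_isUnit_det.2 (hdetE ▸ isUnit_one)
  rwa [← hunit.mul_eq_left.1 hidem]

theorem inv_mem_closure_range_pow (hdet : T.det = 1) (hT : IsPowerBounded T) :
    T⁻¹ ∈ closure (Set.range fun k : ℕ => T ^ k) := by
  have hunit : IsUnit T.det := hdet ▸ isUnit_one
  have h := map_mem_closure (continuous_const_mul T⁻¹) (one_mem_closure_range_pow_succ hdet hT)
    (t := Set.range fun k : ℕ => T ^ k) (by
      rintro _ ⟨k, rfl⟩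
      exact ⟨k, by simp only [pow_succ', Matrix.nonsing_inv_mul_cancel_left T _ hunit]⟩)
  rwa [mul_one] at h

theorem isBounded_of_forall_isPowerBounded (hdet : ∀ A ∈ S, A.det = 1)
    (hmul : ∀ A ∈ S, ∀ B ∈ S, A * B ∈ S) (hclosed : IsClosed S)
    (hpow : ∀ A ∈ S, IsPowerBounded A) : Bornology.IsBounded S := by
  rcases S.eq_empty_or_nonempty with rfl | ⟨A₀, hA₀⟩
  · exact Bornology.isBounded_empty
  have one_mem : 1 ∈ S := closure_minimal (Set.range_subset_iff.2 (pow_succ_mem hmul hA₀)) hclosed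
    (one_mem_closure_range_pow_succ (hdet A₀ hA₀) (hpow A₀ hA₀))
  let P : Submonoid (Matrix (Fin m) (Fin m) ℝ) := ⟨⟨S, fun hA hB => hmul _ hA _ hB⟩, one_mem⟩
  have inv_mem : ∀ A ∈ S, A⁻¹ ∈ S := fun A hA =>
    closure_minimal (Set.range_subset_iff.2 (P.pow_mem hA)) hclosed
      (inv_mem_closure_range_pow (hdet A hA) (hpow A hA))
  let G : Subgroup (Matrix (Fin m) (Fin m) ℝ)ˣ :=
    { P.comap (Units.coeHom _) with
      inv_mem' := fun {g} hg => show ((g⁻¹ : (Matrix (Fin m) (Fin m) ℝ)ˣ) : Matrix _ _ ℝ) ∈ S by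
        rw [Matrix.coe_units_inv]
        exact inv_mem g hg }
  obtain ⟨M, hM⟩ := exists_norm_le_of_isClosed (G := G) (hclosed.preimage Units.continuous_val)
    fun g hg => hpow g hg
  refine isBounded_iff_forall_norm_le.2 ⟨M, fun A hA => ?_⟩
  obtain ⟨g, rfl⟩ := A.isUnit_iff_isUnit_det.2 (hdet A hA ▸ isUnit_one)
  exact hM g hA

theorem isPowerBounded_iff_actsDistally (hdet : T.det = 1) :
    IsPowerBounded T ↔ ActsDistally (Set.range fun k : ℕ => T ^ (k + 1)) := by
  rw [actsDistally_iff_isBounded (by rintro _ ⟨k, rfl⟩; rw [Matrix.det_pow, hdet, one_pow])]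
  refine ⟨fun h => h.subset (Set.range_subset_iff.2 fun k => ⟨k + 1, rfl⟩),
    fun h => (h.insert 1).subset (Set.range_subset_iff.2 fun k => ?_)⟩
  cases k with
  | zero => exact Set.mem_insert_iff.2 (Or.inl (pow_zero T))
  | succ k => exact Set.mem_insert_of_mem 1 ⟨k, rfl⟩

theorem actsDistally_iff_forall_range_pow_succ (hdet : ∀ A ∈ S, A.det = 1)
    (hmul : ∀ A ∈ S, ∀ B ∈ S, A * B ∈ S) (hclosed : IsClosed S) :
    ActsDistally S ↔ ∀ T ∈ S, ActsDistally (Set.range fun k : ℕ => T ^ (k + 1)) := by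
  refine ⟨fun h T hT => h.mono (Set.range_subset_iff.2 (pow_succ_mem hmul hT)), fun h => ?_⟩
  exact actsDistally_of_isBounded hdet (isBounded_of_forall_isPowerBounded hdet hmul hclosed
    fun T hT => (isPowerBounded_iff_actsDistally (hdet T hT)).2 (h T hT))

end ClosedSemigroup

theorem stmt6 (n : ℕ) (S : Set (Matrix (Fin (n + 1)) (Fin (n + 1)) ℝ))
    (hdet : ∀ A ∈ S, A.det = 1)
    (hmul : ∀ A ∈ S, ∀ B ∈ S, A * B ∈ S)
    (hclosed : IsClosed S) :
    (∀ x y : EuclideanSpace ℝ (Fin (n + 1)), ‖x‖ = 1 → ‖y‖ = 1 → x ≠ y →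
      ∀ p ∈ closure {q : EuclideanSpace ℝ (Fin (n + 1)) × EuclideanSpace ℝ (Fin (n + 1)) |
          ∃ T ∈ S, q = (nact T x, nact T y)},
        p.1 ≠ p.2)
    ↔
    (∀ T ∈ S, ∀ x y : EuclideanSpace ℝ (Fin (n + 1)), ‖x‖ = 1 → ‖y‖ = 1 → x ≠ y →
      ∀ p ∈ closure {q : EuclideanSpace ℝ (Fin (n + 1)) × EuclideanSpace ℝ (Fin (n + 1)) |
          ∃ m : ℕ, q = (nact (T ^ (m + 1)) x, nact (T ^ (m + 1)) y)},
        p.1 ≠ p.2) := by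
  refine (actsDistally_iff_forall_range_pow_succ hdet hmul hclosed).trans ?_
  simp only [ActsDistally, Set.exists_range_iff]
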